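/- Let 9/5 ≤ q ≤ 2 and (3−q)/(5q−6) ≤ k ≤ (3−q)/3. There exists a constant c > 0 depending only on q and k such that for every vector field v ∈ L^∞(−1,0; L²(B(1))) whose weak spatial gradient satisfies ∇v ∈ L^q(Q(1)), and every 0 < r ≤ 1, one has C̃(r) ≤ c · A(r)^{(9−3q−3qk)/(6−2q)} · E_q(r)^{3k/(3−q)}. -/

import Mathlib

/- Setting: suitable weak solutions of the 3D incompressible Navier–Stokes equations,
   following Caffarelli–Kohn–Nirenberg.  The velocity field is `v`, its weak spatial
   gradient is `dv`, the pressure is `p` and the force is `f`. -/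

open MeasureTheory Filter Metric Set Bornology
open scoped Topology ENNReal

noncomputable section

/-- Three dimensional Euclidean space. -/
abbrev V3 : Type := EuclideanSpace ℝ (Fin 3)

/-- The standard basis of `V3`. -/
def e3 (i : Fin 3) : V3 := EuclideanSpace.single i 1

/-- Euclidean dot product. -/
def dot3 (a b : V3) : ℝ := ∑ i, a i * b i

/-- Squared Frobenius norm of a (gradient) matrix. -/
def fnormSq (A : V3 →L[ℝ] V3) : ℝ := ∑ i, ‖A (e3 i)‖ ^ 2

/-- Frobenius norm of a (gradient) matrix. -/
def fnorm (A : V3 →L[ℝ] V3) : ℝ := Real.sqrt (fnormSq A)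

/-- Frobenius inner product of two (gradient) matrices. -/
def fdot (A B : V3 →L[ℝ] V3) : ℝ := ∑ i, dot3 (A (e3 i)) (B (e3 i))

/-- Laplacian of a scalar function on `V3`. -/
def lap3 (φ : V3 → ℝ) (x : V3) : ℝ :=
  ∑ i, fderiv ℝ (fun y => fderiv ℝ φ y (e3 i)) x (e3 i)

/-- Smooth compactly supported scalar test function on a spatial domain. -/
def IsSpaceTest (U : Set V3) (φ : V3 → ℝ) : Prop :=
  ContDiff ℝ (⊤ : ℕ∞) φ ∧ HasCompactSupport φ ∧ tsupport φ ⊆ U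

/-- Smooth compactly supported scalar test function on a space-time domain. -/
def IsTimeSpaceTest (U : Set V3) (I : Set ℝ) (φ : V3 → ℝ → ℝ) : Prop :=
  ContDiff ℝ (⊤ : ℕ∞) (fun z : V3 × ℝ => φ z.1 z.2) ∧
  HasCompactSupport (fun z : V3 × ℝ => φ z.1 z.2) ∧
  tsupport (fun z : V3 × ℝ => φ z.1 z.2) ⊆ U ×ˢ I

/-- Smooth compactly supported vector test field on a space-time domain. -/
def IsVectorTest (U : Set V3) (I : Set ℝ) (ψ : V3 → ℝ → V3) : Prop :=
  ContDiff ℝ (⊤ : ℕ∞) (fun z : V3 × ℝ => ψ z.1 z.2) ∧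
  HasCompactSupport (fun z : V3 × ℝ => ψ z.1 z.2) ∧
  tsupport (fun z : V3 × ℝ => ψ z.1 z.2) ⊆ U ×ˢ I

/-- `Ω` has a `C²` boundary: near every boundary point, `Ω` is the sublevel set of a
`C²` function with nonvanishing gradient. -/
def HasC2Boundary (Ω : Set V3) : Prop :=
  ∀ x ∈ frontier Ω, ∃ (U : Set V3) (g : V3 → ℝ), IsOpen U ∧ x ∈ U ∧
    ContDiff ℝ 2 g ∧ (∀ y ∈ U, fderiv ℝ g y ≠ 0) ∧ Ω ∩ U = {y ∈ U | g y < 0}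

/-- `dv` is the weak spatial gradient of `v` on `U × I`. -/
def IsWeakSpatialGradient (U : Set V3) (I : Set ℝ) (v : V3 → ℝ → V3)
    (dv : V3 → ℝ → V3 →L[ℝ] V3) : Prop :=
  ∀ᵐ t ∂(volume.restrict I), ∀ φ : V3 → ℝ, IsSpaceTest U φ → ∀ u : V3,
    (∫ x in U, φ x • dv x t u) = - ∫ x in U, fderiv ℝ φ x u • v x t

/-- `(v, p)` is a suitable weak solution of the Navier–Stokes system with force `f` on
`Ω × (a, b)`, where `Ω ⊆ ℝ³` is a bounded `C²` domain; `dv` denotes the weak spatial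
gradient of `v`. -/
structure IsSuitableWeakSolution (Ω : Set V3) (a b : ℝ) (v : V3 → ℝ → V3)
    (dv : V3 → ℝ → V3 →L[ℝ] V3) (p : V3 → ℝ → ℝ) (f : V3 → ℝ → V3) : Prop where
  open_dom : IsOpen Ω
  bounded_dom : IsBounded Ω
  nonempty_dom : Ω.Nonempty
  c2_boundary : HasC2Boundary Ω
  time_lt : a < b
  meas_v : AEMeasurable (fun z : V3 × ℝ => v z.1 z.2) (volume.restrict (Ω ×ˢ Ioo a b))
  meas_dv : AEMeasurable (fun z : V3 × ℝ => dv z.1 z.2) (volume.restrict (Ω ×ˢ Ioo a b))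
  meas_p : AEMeasurable (fun z : V3 × ℝ => p z.1 z.2) (volume.restrict (Ω ×ˢ Ioo a b))
  meas_f : AEMeasurable (fun z : V3 × ℝ => f z.1 z.2) (volume.restrict (Ω ×ˢ Ioo a b))
  /-- `v ∈ L^∞(a,b; L²(Ω))`. -/
  v_linf_l2 : ∃ K : ℝ, ∀ᵐ t ∂(volume.restrict (Ioo a b)),
    IntegrableOn (fun x => ‖v x t‖ ^ 2) Ω volume ∧ (∫ x in Ω, ‖v x t‖ ^ 2) ≤ K
  /-- `∇v ∈ L²(Ω × (a,b))`. -/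
  dv_l2 : IntegrableOn (fun z : V3 × ℝ => fnormSq (dv z.1 z.2)) (Ω ×ˢ Ioo a b) volume
  /-- `p ∈ L^{3/2}(Ω × (a,b))`. -/
  p_l32 : IntegrableOn (fun z : V3 × ℝ => |p z.1 z.2| ^ ((3:ℝ)/2)) (Ω ×ˢ Ioo a b) volume
  /-- `f ∈ L^m(Ω × (a,b))` for some `m > 5/2`. -/
  f_lm : ∃ m : ℝ, 5/2 < m ∧
    IntegrableOn (fun z : V3 × ℝ => ‖f z.1 z.2‖ ^ m) (Ω ×ˢ Ioo a b) volume
  /-- `dv` is the weak spatial gradient of `v`. -/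
  weak_gradient : IsWeakSpatialGradient Ω (Ioo a b) v dv
  /-- `v` is divergence free in the sense of distributions. -/
  div_free : ∀ᵐ t ∂(volume.restrict (Ioo a b)), ∀ φ : V3 → ℝ, IsSpaceTest Ω φ →
    (∫ x in Ω, fderiv ℝ φ x (v x t)) = 0
  /-- The Navier–Stokes equations hold in the sense of distributions. -/
  nse : ∀ ψ : V3 → ℝ → V3, IsVectorTest Ω (Ioo a b) ψ →
    (∫ t in Ioo a b, ∫ x in Ω,
      (dot3 (v x t) (deriv (fun s => ψ x s) t)
        - fdot (dv x t) (fderiv ℝ (fun y => ψ y t) x)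
        - dot3 (dv x t (v x t)) (ψ x t)
        + p x t * (∑ i, fderiv ℝ (fun y => ψ y t) x (e3 i) i)
        + dot3 (f x t) (ψ x t))) = 0
  /-- The generalized local energy inequality. -/
  energy : ∀ᵐ t ∂(volume.restrict (Ioo a b)), ∀ φ : V3 → ℝ → ℝ,
    IsTimeSpaceTest Ω (Ioo a b) φ → (∀ x s, 0 ≤ φ x s) →
    (∫ x in Ω, ‖v x t‖ ^ 2 * φ x t)
        + 2 * ∫ s in Ioo a t, ∫ x in Ω, fnormSq (dv x s) * φ x s
      ≤ (∫ s in Ioo a t, ∫ x in Ω,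
            ‖v x s‖ ^ 2 * (deriv (fun τ => φ x τ) s + lap3 (fun y => φ y s) x))
        + (∫ s in Ioo a t, ∫ x in Ω, ‖v x s‖ ^ 2 * fderiv ℝ (fun y => φ y s) x (v x s))
        + 2 * (∫ s in Ioo a t, ∫ x in Ω, p x s * fderiv ℝ (fun y => φ y s) x (v x s))
        + 2 * (∫ s in Ioo a t, ∫ x in Ω, dot3 (f x s) (v x s) * φ x s)

/-- `E_q(z,r) = r^{-5+2q} ∬_{Q(z,r)} |∇v|^q`, centered at `z = (x₀,t₀)`. -/
def funEq (dv : V3 → ℝ → V3 →L[ℝ] V3) (q : ℝ) (z : V3 × ℝ) (r : ℝ) : ℝ :=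
  r ^ (2 * q - 5) * ∫ t in Ioo (z.2 - r ^ 2) z.2, ∫ x in ball z.1 r, fnorm (dv x t) ^ q

/-- `E(z,r) = r⁻¹ ∬_{Q(z,r)} |∇v|²`, centered at `z = (x₀,t₀)`. -/
def funE2 (dv : V3 → ℝ → V3 →L[ℝ] V3) (z : V3 × ℝ) (r : ℝ) : ℝ :=
  r⁻¹ * ∫ t in Ioo (z.2 - r ^ 2) z.2, ∫ x in ball z.1 r, fnormSq (dv x t)

/-- `z` is a regular point of `v`: `v` is essentially bounded on some parabolic
cylinder `Q(z,ρ)`. -/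
def RegularPoint (v : V3 → ℝ → V3) (z : V3 × ℝ) : Prop :=
  ∃ ρ : ℝ, 0 < ρ ∧ ∃ K : ℝ,
    ∀ᵐ w : V3 × ℝ ∂(volume.restrict (ball z.1 ρ ×ˢ Ioo (z.2 - ρ ^ 2) z.2)),
      ‖v w.1 w.2‖ ≤ K

/- Scaled functionals centered at the reference point `z = (0,0)`. -/

/-- `A(r) = r⁻¹ sup_{-r²<s<0} ∫_{B(r)} |v|²`. -/
def funA (v : V3 → ℝ → V3) (r : ℝ) : ℝ :=
  r⁻¹ * sSup ((fun s => ∫ x in ball (0 : V3) r, ‖v x s‖ ^ 2) '' Ioo (-r ^ 2) 0)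

/-- `E(r) = r⁻¹ ∬_{Q(r)} |∇v|²`. -/
def funE (dv : V3 → ℝ → V3 →L[ℝ] V3) (r : ℝ) : ℝ :=
  r⁻¹ * ∫ t in Ioo (-r ^ 2) 0, ∫ x in ball (0 : V3) r, fnormSq (dv x t)

/-- `E_q(r) = r^{-5+2q} ∬_{Q(r)} |∇v|^q`. -/
def funEqz (dv : V3 → ℝ → V3 →L[ℝ] V3) (q r : ℝ) : ℝ :=
  r ^ (2 * q - 5) * ∫ t in Ioo (-r ^ 2) 0, ∫ x in ball (0 : V3) r, fnorm (dv x t) ^ q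

/-- `C(r) = r⁻² ∬_{Q(r)} |v|³`. -/
def funC (v : V3 → ℝ → V3) (r : ℝ) : ℝ :=
  r ^ (-2 : ℝ) * ∫ t in Ioo (-r ^ 2) 0, ∫ x in ball (0 : V3) r, ‖v x t‖ ^ 3

/-- `D(r) = r⁻² ∬_{Q(r)} |p - ⟨p⟩_{B(r)}|^{3/2}`. -/
def funD (p : V3 → ℝ → ℝ) (r : ℝ) : ℝ :=
  r ^ (-2 : ℝ) * ∫ t in Ioo (-r ^ 2) 0, ∫ x in ball (0 : V3) r,
    |p x t - ⨍ y in ball (0 : V3) r, p y t| ^ ((3:ℝ)/2)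

/-- `C̃(r) = r⁻² ∬_{Q(r)} |v - ⟨v⟩_{B(r)}|³`. -/
def funCt (v : V3 → ℝ → V3) (r : ℝ) : ℝ :=
  r ^ (-2 : ℝ) * ∫ t in Ioo (-r ^ 2) 0, ∫ x in ball (0 : V3) r,
    ‖v x t - ⨍ y in ball (0 : V3) r, v y t‖ ^ 3

/-- `G(r) = r⁻¹ ∫_{-r²}^0 (∫_{B(r)} |v|⁶)^{1/3}`. -/
def funG (v : V3 → ℝ → V3) (r : ℝ) : ℝ :=
  r⁻¹ * ∫ t in Ioo (-r ^ 2) 0, (∫ x in ball (0 : V3) r, ‖v x t‖ ^ 6) ^ ((1:ℝ)/3)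

/-- `P(r) = r⁻² inf_{c∈ℝ} ( ∫_{-r²}^0 (∫_{B(r)} |p - c|³)^{1/3} )²`. -/
def funP (p : V3 → ℝ → ℝ) (r : ℝ) : ℝ :=
  r ^ (-2 : ℝ) * ⨅ c : ℝ,
    (∫ t in Ioo (-r ^ 2) 0, (∫ x in ball (0 : V3) r, |p x t - c| ^ 3) ^ ((1:ℝ)/3)) ^ 2

/-- `F(r) = ( ∫_{-r²}^0 (∫_{B(r)} |f|²)^{2/3} )^{3/2}`. -/
def funF (f : V3 → ℝ → V3) (r : ℝ) : ℝ :=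
  (∫ t in Ioo (-r ^ 2) 0, (∫ x in ball (0 : V3) r, ‖f x t‖ ^ 2) ^ ((2:ℝ)/3)) ^ ((3:ℝ)/2)

/-! On a convex domain the deviation of `u` from a weighted mean is bounded by `∫₀¹ M_s |∇u| ds`,
where `M_s` averages over a ball of radius comparable to `s`. To estimate the `Lᵖ` norm of the
deviation `w`, write `w ^ p = w * w ^ (p - 1)` and bound the first factor by this integral over
scales: at each scale one may use either the supremum of `M_s |∇u|` or Hölder's inequality, and
splitting the scales at the value where the two bounds cross gives an interpolation between
`∫ |w| ^ (p - 1)` and `∫ |∇u| ^ q`. Dilating the domain gives the power of the radius, and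
Jensen's inequality integrates the result in time, since the gradient enters with an exponent
`β ≤ 1`. -/

section PowerIntegrals

lemma lintegral_Ioo_rpow {b δ : ℝ} (hb : b < 1) (hδ : 0 ≤ δ) :
    ∫⁻ t in Ioo 0 δ, ENNReal.ofReal (t ^ (-b)) = ENNReal.ofReal (δ ^ (1 - b) / (1 - b)) := by
  have hint : IntervalIntegrable (fun t : ℝ => t ^ (-b)) volume 0 δ :=
    intervalIntegral.intervalIntegrable_rpow' (by linarith)
  rw [restrict_Ioo_eq_restrict_Ioc,
    ← ofReal_integral_eq_lintegral_ofReal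
      ((intervalIntegrable_iff_integrableOn_Ioc_of_le hδ).1 hint)
      ((ae_restrict_mem measurableSet_Ioc).mono fun t ht => Real.rpow_nonneg ht.1.le _),
    ← intervalIntegral.integral_of_le hδ, integral_rpow (Or.inl (by linarith)),
    Real.zero_rpow (by linarith), sub_zero, neg_add_eq_sub]

lemma lintegral_Ioi_rpow {a δ : ℝ} (ha : 1 < a) (hδ : 0 < δ) :
    ∫⁻ t in Ioi δ, ENNReal.ofReal (t ^ (-a)) = ENNReal.ofReal (δ ^ (1 - a) / (a - 1)) := by
  rw [← ofReal_integral_eq_lintegral_ofReal (integrableOn_Ioi_rpow_of_lt (by linarith) hδ)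
      ((ae_restrict_mem measurableSet_Ioi).mono fun t ht =>
        Real.rpow_nonneg (hδ.trans (mem_Ioi.1 ht)).le _),
    integral_Ioi_rpow_of_lt (by linarith) hδ, neg_add_eq_sub, ← neg_sub a 1, neg_div_neg_eq]

lemma min_le_rpow_mul_rpow (x y : ℝ≥0∞) {κ : ℝ} (hκ₀ : 0 ≤ κ) (hκ₁ : κ ≤ 1) :
    min x y ≤ x ^ κ * y ^ (1 - κ) := by
  have hκ' : 0 ≤ 1 - κ := sub_nonneg.2 hκ₁
  calc min x y = min x y ^ κ * min x y ^ (1 - κ) := by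
        rw [← ENNReal.rpow_add_of_nonneg _ _ hκ₀ hκ', add_sub_cancel, ENNReal.rpow_one]
    _ ≤ x ^ κ * y ^ (1 - κ) := by
        gcongr
        · exact min_le_left x y
        · exact min_le_right x y

lemma lintegral_min_rpow_le_add {a b δ : ℝ} (ha : 1 < a) (hb : b < 1) (hδ : 0 < δ) (A B : ℝ≥0∞) :
    ∫⁻ t in Ioi (0 : ℝ), min (A * ENNReal.ofReal (t ^ (-a))) (B * ENNReal.ofReal (t ^ (-b))) ≤
      B * ENNReal.ofReal (δ ^ (1 - b) / (1 - b)) + A * ENNReal.ofReal (δ ^ (1 - a) / (a - 1)) := by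
  rw [← lintegral_Ioo_rpow hb hδ.le, ← lintegral_Ioi_rpow ha hδ,
    ← lintegral_const_mul _ (by fun_prop), ← lintegral_const_mul _ (by fun_prop),
    ← Ioc_union_Ioi_eq_Ioi hδ.le, restrict_Ioo_eq_restrict_Ioc]
  refine (lintegral_union_le _ _ _).trans ?_
  gcongr
  · exact min_le_right _ _
  · exact min_le_left _ _

lemma lintegral_Ioi_min_rpow_le_of_pos {a b α β : ℝ} (ha : 1 < a) (hb : b < 1) (hα : 0 < α)
    (hβ : 0 < β) :
    ∫⁻ t in Ioi (0 : ℝ), min (ENNReal.ofReal α * ENNReal.ofReal (t ^ (-a)))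
        (ENNReal.ofReal β * ENNReal.ofReal (t ^ (-b))) ≤
      ENNReal.ofReal (1 / (1 - b) + 1 / (a - 1)) *
        (ENNReal.ofReal α ^ ((1 - b) / (a - b)) * ENNReal.ofReal β ^ (1 - (1 - b) / (a - b))) := by
  have hab : 0 < a - b := by linarith
  have ha' : 0 < a - 1 := by linarith
  have hb' : 0 < 1 - b := by linarith
  set κ := (1 - b) / (a - b) with hκ
  have hκ' : 1 - κ = (a - 1) / (a - b) := by rw [hκ, one_sub_div hab.ne']; ring
  -- the two bounds cross at this value of `t`
  have hδ : 0 < (α / β) ^ (1 / (a - b)) := by positivity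
  refine (lintegral_min_rpow_le_add ha hb hδ _ _).trans_eq ?_
  have hδb : ((α / β) ^ (1 / (a - b))) ^ (1 - b) = α ^ κ / β ^ κ := by
    rw [← Real.rpow_mul (by positivity), one_div_mul_eq_div, Real.div_rpow hα.le hβ.le]
  have hδa : ((α / β) ^ (1 / (a - b))) ^ (1 - a) = β ^ (1 - κ) / α ^ (1 - κ) := by
    rw [← Real.rpow_mul (by positivity), one_div_mul_eq_div, ← neg_sub a 1, neg_div, ← hκ',
      Real.rpow_neg (by positivity), Real.div_rpow hα.le hβ.le, inv_div]
  rw [hδa, hδb, ENNReal.ofReal_rpow_of_pos hα, ENNReal.ofReal_rpow_of_pos hβ,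
    ← ENNReal.ofReal_mul hα.le, ← ENNReal.ofReal_mul hβ.le, ← ENNReal.ofReal_mul (by positivity),
    ← ENNReal.ofReal_mul (by positivity), ← ENNReal.ofReal_add (by positivity) (by positivity),
    Real.rpow_sub hα, Real.rpow_sub hβ, Real.rpow_one, Real.rpow_one]
  congr 1
  field_simp

lemma exists_lintegral_Ioi_min_rpow_le {a b : ℝ} (ha : 1 < a) (hb : b < 1) :
    ∃ C : ℝ≥0∞, C ≠ ∞ ∧ ∀ A B : ℝ≥0∞,
      ∫⁻ t in Ioi (0 : ℝ), min (A * ENNReal.ofReal (t ^ (-a))) (B * ENNReal.ofReal (t ^ (-b))) ≤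
        C * (A ^ ((1 - b) / (a - b)) * B ^ (1 - (1 - b) / (a - b))) := by
  have : 0 < a - 1 := by linarith
  have hb' : 0 < 1 - b := by linarith
  have hab : 0 < a - b := by linarith
  have hκ₀ : 0 < (1 - b) / (a - b) := div_pos hb' hab
  have hκ₁ : 0 < 1 - (1 - b) / (a - b) := by
    rw [one_sub_div hab.ne']; exact div_pos (by linarith) hab
  have hC : ENNReal.ofReal (1 / (1 - b) + 1 / (a - 1)) ≠ 0 :=
    (ENNReal.ofReal_pos.2 (by positivity)).ne'
  refine ⟨ENNReal.ofReal (1 / (1 - b) + 1 / (a - 1)), ENNReal.ofReal_ne_top, fun A B => ?_⟩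
  rcases eq_or_ne A 0 with rfl | hA
  · simp
  rcases eq_or_ne B 0 with rfl | hB
  · simp
  rcases eq_or_ne A ∞ with rfl | hA'
  · rw [ENNReal.top_rpow_of_pos hκ₀, ENNReal.top_mul (by simp [hB, hκ₁.not_gt]),
      ENNReal.mul_top hC]
    exact le_top
  rcases eq_or_ne B ∞ with rfl | hB'
  · rw [ENNReal.top_rpow_of_pos hκ₁, ENNReal.mul_top (by simp [hA, hκ₀.not_gt]),
      ENNReal.mul_top hC]
    exact le_top
  rw [← ENNReal.ofReal_toReal hA', ← ENNReal.ofReal_toReal hB']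
  exact lintegral_Ioi_min_rpow_le_of_pos ha hb (ENNReal.toReal_pos hA hA')
    (ENNReal.toReal_pos hB hB')

lemma exists_lintegral_Ioo_min_rpow_le {a b κ : ℝ} (ha : 1 < a) (hb : b < 1) (hκ₀ : 0 ≤ κ)
    (hκ₁ : κ ≤ (1 - b) / (a - b)) (R : ℝ) :
    ∃ C : ℝ≥0∞, C ≠ ∞ ∧ ∀ A B : ℝ≥0∞,
      ∫⁻ t in Ioo 0 R, min (A * ENNReal.ofReal (t ^ (-a))) (B * ENNReal.ofReal (t ^ (-b))) ≤
        C * (A ^ κ * B ^ (1 - κ)) := by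
  have hab : 0 < a - b := by linarith
  rcases hκ₁.eq_or_lt with rfl | hlt
  · obtain ⟨C, hC, hle⟩ := exists_lintegral_Ioi_min_rpow_le ha hb
    exact ⟨C, hC, fun A B => (lintegral_mono_set Ioo_subset_Ioi_self).trans (hle A B)⟩
  have hexp : a * κ + b * (1 - κ) < 1 := by
    have := (lt_div_iff₀ hab).1 hlt; linarith
  have hκ : κ ≤ 1 := hlt.le.trans ((div_le_one hab).2 (by linarith))
  have hκ' : 0 ≤ 1 - κ := sub_nonneg.2 hκ
  refine ⟨∫⁻ t in Ioo 0 R, ENNReal.ofReal (t ^ (-(a * κ + b * (1 - κ)))), ?_, fun A B => ?_⟩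
  · rcases le_total 0 R with hR | hR
    · rw [lintegral_Ioo_rpow hexp hR]; exact ENNReal.ofReal_ne_top
    · simp [Ioo_eq_empty_of_le hR]
  rw [mul_comm, ← lintegral_const_mul _ (by fun_prop)]
  refine setLIntegral_mono (by fun_prop) fun t ht => (min_le_rpow_mul_rpow _ _ hκ₀ hκ).trans_eq ?_
  have ht₀ : 0 < t := ht.1
  rw [ENNReal.mul_rpow_of_nonneg _ _ hκ₀, ENNReal.mul_rpow_of_nonneg _ _ hκ', mul_mul_mul_comm,
    ENNReal.ofReal_rpow_of_pos (by positivity), ENNReal.ofReal_rpow_of_pos (by positivity),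
    ← Real.rpow_mul ht₀.le, ← Real.rpow_mul ht₀.le, ← ENNReal.ofReal_mul (by positivity),
    ← Real.rpow_add ht₀]
  congr 3
  ring

end PowerIntegrals

section AbstractInterpolation

variable {Ω : Type*} [MeasurableSpace Ω] {ν : Measure Ω}

lemma lintegral_rpow_le_lintegral_min [SFinite ν] {T : Set ℝ} (hT : MeasurableSet T)
    {M : ℝ → Ω → ℝ≥0∞} (hM : Measurable (Function.uncurry M)) {S N : ℝ → ℝ≥0∞} {p : ℝ}
    (hp : 1 < p) (hS : ∀ t ∈ T, ∀ x, M t x ≤ S t)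
    (hN : ∀ t ∈ T, (∫⁻ x, M t x ^ p ∂ν) ^ (1 / p) ≤ N t) {w : Ω → ℝ≥0∞} (hw : AEMeasurable w ν)
    (hwM : ∀ᵐ x ∂ν, w x ≤ ∫⁻ t in T, M t x) :
    ∫⁻ x, w x ^ p ∂ν ≤
      ∫⁻ t in T, min (S t * ∫⁻ x, w x ^ (p - 1) ∂ν) (N t * (∫⁻ x, w x ^ p ∂ν) ^ (1 - 1 / p)) := by
  have hconj : p.HolderConjugate (Real.conjExponent p) := .conjExponent hp
  have hsection : ∀ t, Measurable (M t) := fun t => hM.of_uncurry_left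
  have hw' : AEMeasurable (fun x => w x ^ (p - 1)) ν := hw.pow_const _
  have hpair : ∫⁻ x, w x ^ p ∂ν ≤ ∫⁻ t in T, ∫⁻ x, M t x * w x ^ (p - 1) ∂ν := calc
    ∫⁻ x, w x ^ p ∂ν = ∫⁻ x, w x * w x ^ (p - 1) ∂ν := by
        refine lintegral_congr fun x => ?_
        nth_rw 2 [← ENNReal.rpow_one (w x)]
        rw [← ENNReal.rpow_add_of_nonneg _ _ zero_le_one (by linarith), add_sub_cancel]
    _ ≤ ∫⁻ x, (∫⁻ t in T, M t x) * w x ^ (p - 1) ∂ν :=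
        lintegral_mono_ae (hwM.mono fun x hx => by gcongr)
    _ = ∫⁻ x, (∫⁻ t in T, M t x * w x ^ (p - 1)) ∂ν :=
        lintegral_congr fun x => (lintegral_mul_const _ hM.of_uncurry_right).symm
    _ = ∫⁻ t in T, ∫⁻ x, M t x * w x ^ (p - 1) ∂ν :=
        lintegral_lintegral_swap
          ((hM.comp measurable_swap).aemeasurable.mul (hw'.comp_fst))
  refine hpair.trans (setLIntegral_mono' hT fun t ht => le_min ?_ ?_)
  · rw [← lintegral_const_mul'' _ hw']
    exact lintegral_mono fun x => by gcongr; exact hS t ht x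
  · have hholder := ENNReal.lintegral_mul_le_Lp_mul_Lq ν hconj (hsection t).aemeasurable hw'
    have hinv : 1 / p.conjExponent = 1 - 1 / p := by
      rw [one_div, one_div, eq_sub_iff_add_eq', hconj.inv_add_inv_eq_one]
    simp only [Pi.mul_apply, ← ENNReal.rpow_mul, hconj.sub_one_mul_conj, hinv] at hholder
    exact hholder.trans (by gcongr; exact hN t ht)

lemma lintegral_rpow_le_of_forall_lintegral_min_rpow_le {h : Ω → ℝ≥0∞} (hh : AEMeasurable h ν)
    {p : ℝ} (hp : 0 ≤ p) {K : ℝ≥0∞} (hK : ∀ n : ℕ, ∫⁻ x, min (h x) n ^ p ∂ν ≤ K) :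
    ∫⁻ x, h x ^ p ∂ν ≤ K := by
  refine le_of_tendsto' (lintegral_tendsto_of_tendsto_of_monotone
    (fun n => (hh.min aemeasurable_const).pow_const p) (ae_of_all _ fun x m n hmn => ?_)
    (ae_of_all _ fun x => ?_)) hK
  · dsimp only
    gcongr
  · have hmin : Tendsto (fun n : ℕ => min (h x) n) atTop (𝓝 (min (h x) ∞)) :=
      tendsto_const_nhds.min ENNReal.tendsto_nat_nhds_top
    rw [min_eq_left le_top] at hmin
    exact (ENNReal.continuous_rpow_const.tendsto _).comp hmin

variable {p a b κ : ℝ}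

lemma rpow_one_sub_le_of_le_mul_rpow {X K : ℝ≥0∞} {τ : ℝ} (hτ : τ < 1) (hX : X ≠ ∞)
    (hle : X ≤ K * X ^ τ) : X ^ (1 - τ) ≤ K := by
  rcases eq_or_ne X 0 with rfl | hX₀
  · simp [ENNReal.zero_rpow_of_pos (sub_pos.2 hτ)]
  rw [ENNReal.rpow_sub _ _ hX₀ hX, ENNReal.rpow_one]
  exact ENNReal.div_le_of_le_mul hle

/-- The function `h` is dominated by the superposition of the functions `M t` over the scales
`0 < t < R`, where the sup norm of `M t` is at most `G * t ^ (-a)` and its `L ^ p` norm is at most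
`G * t ^ (-b)`. -/
structure IsScaleDecomposition (ν : Measure Ω) (p a b R : ℝ) (G : ℝ≥0∞) (M : ℝ → Ω → ℝ≥0∞)
    (h : Ω → ℝ≥0∞) : Prop where
  measurable : Measurable (Function.uncurry M)
  apply_le : ∀ t ∈ Ioo 0 R, ∀ x, M t x ≤ G * ENNReal.ofReal (t ^ (-a))
  lintegral_rpow_le : ∀ t ∈ Ioo 0 R,
    (∫⁻ x, M t x ^ p ∂ν) ^ (1 / p) ≤ G * ENNReal.ofReal (t ^ (-b))
  aemeasurable : AEMeasurable h ν
  ae_le : ∀ᵐ x ∂ν, h x ≤ ∫⁻ t in Ioo 0 R, M t x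

lemma IsScaleDecomposition.min_const {R : ℝ} {G : ℝ≥0∞} {M : ℝ → Ω → ℝ≥0∞} {h : Ω → ℝ≥0∞}
    (hM : IsScaleDecomposition ν p a b R G M h) (n : ℝ≥0∞) :
    IsScaleDecomposition ν p a b R G M fun x => min (h x) n where
  __ := hM
  aemeasurable := hM.aemeasurable.min aemeasurable_const
  ae_le := hM.ae_le.mono fun _ hx => (min_le_left _ _).trans hx

lemma exists_lintegral_rpow_le_of_ne_top [SFinite ν] (hp : 1 < p) (ha : 1 < a) (hb : b < 1)
    (hκ₀ : 0 ≤ κ) (hκ₁ : κ ≤ (1 - b) / (a - b)) (R : ℝ) :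
    ∃ C : ℝ≥0∞, C ≠ ∞ ∧ ∀ (G : ℝ≥0∞) (M : ℝ → Ω → ℝ≥0∞) (h : Ω → ℝ≥0∞),
      IsScaleDecomposition ν p a b R G M h → ∫⁻ x, h x ^ p ∂ν ≠ ∞ →
      (∫⁻ x, h x ^ p ∂ν) ^ (1 - (1 - 1 / p) * (1 - κ)) ≤
        C * (G * (∫⁻ x, h x ^ (p - 1) ∂ν) ^ κ) := by
  obtain ⟨C, hC, hmin⟩ := exists_lintegral_Ioo_min_rpow_le ha hb hκ₀ hκ₁ R
  refine ⟨C, hC, fun G M h hM hX_top => ?_⟩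
  have hκ' : 0 ≤ 1 - κ :=
    sub_nonneg.2 (hκ₁.trans ((div_le_one (by linarith)).2 (by linarith)))
  have hp' : 1 / p < 1 := (div_lt_one (by linarith)).2 hp
  have hp₀ : 0 < 1 / p := by positivity
  set X := ∫⁻ x, h x ^ p ∂ν
  set H := ∫⁻ x, h x ^ (p - 1) ∂ν
  refine rpow_one_sub_le_of_le_mul_rpow (by nlinarith) hX_top ?_
  calc X ≤ ∫⁻ t in Ioo 0 R,
          min (G * ENNReal.ofReal (t ^ (-a)) * H)
            (G * ENNReal.ofReal (t ^ (-b)) * X ^ (1 - 1 / p)) :=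
        lintegral_rpow_le_lintegral_min measurableSet_Ioo hM.measurable hp hM.apply_le
          hM.lintegral_rpow_le hM.aemeasurable hM.ae_le
    _ ≤ C * ((G * H) ^ κ * (G * X ^ (1 - 1 / p)) ^ (1 - κ)) := by
        simp only [mul_right_comm G (ENNReal.ofReal _)]
        exact hmin _ _
    _ = C * (G * H ^ κ) * X ^ ((1 - 1 / p) * (1 - κ)) := by
        rw [ENNReal.mul_rpow_of_nonneg _ _ hκ₀, ENNReal.mul_rpow_of_nonneg _ _ hκ',
          mul_mul_mul_comm, ← ENNReal.rpow_add_of_nonneg _ _ hκ₀ hκ', add_sub_cancel,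
          ENNReal.rpow_one, ← ENNReal.rpow_mul]
        ring

lemma exists_lintegral_rpow_le_of_isScaleDecomposition [IsFiniteMeasure ν] (hp : 1 < p)
    (ha : 1 < a) (hb : b < 1) (hκ₀ : 0 ≤ κ) (hκ₁ : κ ≤ (1 - b) / (a - b)) (R : ℝ) :
    ∃ C : ℝ≥0∞, C ≠ ∞ ∧ ∀ (G : ℝ≥0∞) (M : ℝ → Ω → ℝ≥0∞) (h : Ω → ℝ≥0∞),
      IsScaleDecomposition ν p a b R G M h →
      (∫⁻ x, h x ^ p ∂ν) ^ (1 - (1 - 1 / p) * (1 - κ)) ≤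
        C * (G * (∫⁻ x, h x ^ (p - 1) ∂ν) ^ κ) := by
  obtain ⟨C, hC, hle⟩ := exists_lintegral_rpow_le_of_ne_top (ν := ν) hp ha hb hκ₀ hκ₁ R
  refine ⟨C, hC, fun G M h hM => ?_⟩
  have hκ' : 0 ≤ 1 - κ :=
    sub_nonneg.2 (hκ₁.trans ((div_le_one (by linarith)).2 (by linarith)))
  have hp' : 1 / p < 1 := (div_lt_one (by linarith)).2 hp
  have hp₀ : 0 < 1 / p := by positivity
  have hσ : 0 < 1 - (1 - 1 / p) * (1 - κ) := by nlinarith [mul_nonneg hp₀.le hκ']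
  rw [← ENNReal.le_rpow_inv_iff hσ]
  refine lintegral_rpow_le_of_forall_lintegral_min_rpow_le hM.aemeasurable (by linarith) fun n => ?_
  have hfinite : ∫⁻ x, min (h x) n ^ p ∂ν ≠ ∞ := by
    refine ne_top_of_le_ne_top (b := (n : ℝ≥0∞) ^ p * ν univ) (by finiteness) ?_
    rw [← lintegral_const]
    exact lintegral_mono fun x => by gcongr; exact min_le_right _ _
  rw [ENNReal.le_rpow_inv_iff hσ]
  refine (hle G M _ (hM.min_const n) hfinite).trans ?_
  have hmono : ∫⁻ x, min (h x) n ^ (p - 1) ∂ν ≤ ∫⁻ x, h x ^ (p - 1) ∂ν :=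
    lintegral_mono fun x => ENNReal.rpow_le_rpow (min_le_left _ _) (by linarith)
  gcongr

end AbstractInterpolation

section BallAverages

variable {Ω : Type*} [MeasurableSpace Ω]

lemma laverage_rpow_le {ν : Measure Ω} [IsFiniteMeasure ν] {g : Ω → ℝ≥0∞} (hg : AEMeasurable g ν)
    {q : ℝ} (hq : 1 ≤ q) : (⨍⁻ x, g x ∂ν) ^ q ≤ ⨍⁻ x, g x ^ q ∂ν := by
  rcases eq_zero_or_neZero ν with rfl | hν
  · simp [ENNReal.zero_rpow_of_pos (zero_lt_one.trans_le hq)]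
  have hmeas : AEStronglyMeasurable g ((ν univ)⁻¹ • ν) := (hg.smul_measure _).aestronglyMeasurable
  have hle := eLpNorm'_le_eLpNorm'_of_exponent_le zero_lt_one hq ((ν univ)⁻¹ • ν) hmeas
  simp only [eLpNorm', enorm_eq_self, ENNReal.rpow_one, one_div, inv_one] at hle
  exact (ENNReal.le_rpow_inv_iff (by linarith)).1 hle

lemma setLAverage_closedBall_eq_lintegral {X : Type*} [PseudoMetricSpace X] [MeasurableSpace X]
    [OpensMeasurableSpace X] (μ : Measure X) (g : X → ℝ≥0∞) (t : ℝ) (x : X) :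
    ⨍⁻ z in closedBall x t, g z ∂μ =
      (∫⁻ z, {y : X × X | dist y.2 y.1 ≤ t}.indicator (fun y => g y.2) (x, z) ∂μ) /
        μ (closedBall x t) := by
  rw [setLAverage_eq, ← lintegral_indicator measurableSet_closedBall]
  rfl

variable {E : Type*} [NormedAddCommGroup E] [NormedSpace ℝ E] [FiniteDimensional ℝ E]
  [MeasurableSpace E] [BorelSpace E] (μ : Measure E) [μ.IsAddHaarMeasure] {g : E → ℝ≥0∞}
  {p q t : ℝ}

lemma measurable_setLAverage_closedBall (hg : Measurable g) :
    Measurable (Function.uncurry fun (t : ℝ) (x : E) => ⨍⁻ z in closedBall x t, g z ∂μ) := by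
  have hball : Monotone fun t : ℝ => μ (closedBall (0 : E) t) := fun s t hst =>
    measure_mono (closedBall_subset_closedBall hst)
  have hset : MeasurableSet {y : (ℝ × E) × E | dist y.2 y.1.2 ≤ y.1.1} :=
    measurableSet_le (by fun_prop) (by fun_prop)
  simp only [setLAverage_closedBall_eq_lintegral, Measure.addHaar_closedBall_center,
    Function.uncurry_def]
  exact (((hg.comp measurable_snd).indicator hset).lintegral_prod_right').div
    (hball.measurable.comp measurable_fst)

lemma lintegral_setLAverage_closedBall (hg : Measurable g) (ht : 0 < t) :
    ∫⁻ x, ⨍⁻ z in closedBall x t, g z ∂μ ∂μ = ∫⁻ z, g z ∂μ := by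
  have hset : MeasurableSet {y : E × E | dist y.2 y.1 ≤ t} :=
    measurableSet_le (by fun_prop) (by fun_prop)
  have hmeas : Measurable ({y : E × E | dist y.2 y.1 ≤ t}.indicator fun y => g y.2) :=
    (hg.comp measurable_snd).indicator hset
  have hV : μ (closedBall (0 : E) t) ≠ 0 := (measure_closedBall_pos μ 0 ht).ne'
  have hV' : μ (closedBall (0 : E) t) ≠ ∞ := measure_closedBall_lt_top.ne
  simp only [setLAverage_closedBall_eq_lintegral, Measure.addHaar_closedBall_center,
    div_eq_mul_inv]
  rw [lintegral_mul_const _ hmeas.lintegral_prod_right',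
    lintegral_lintegral_swap (f := fun x z =>
      {y : E × E | dist y.2 y.1 ≤ t}.indicator (fun y => g y.2) (x, z)) hmeas.aemeasurable]
  have hslice : ∀ z, ∫⁻ x, {y : E × E | dist y.2 y.1 ≤ t}.indicator (fun y => g y.2) (x, z) ∂μ =
      g z * μ (closedBall 0 t) := fun z => by
    rw [← Measure.addHaar_closedBall_center μ z, ← setLIntegral_const,
      ← lintegral_indicator measurableSet_closedBall]
    simp only [indicator, mem_closedBall, dist_comm z, mem_ofPred_eq]
  simp only [hslice]
  rw [lintegral_mul_const _ hg, mul_assoc, ENNReal.mul_inv_cancel hV hV', mul_one]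

lemma setLAverage_closedBall_le (hg : Measurable g) (hq : 1 ≤ q) (x : E) :
    ⨍⁻ z in closedBall x t, g z ∂μ ≤
      (μ (closedBall 0 t))⁻¹ ^ (1 / q) * (∫⁻ z, g z ^ q ∂μ) ^ (1 / q) := by
  have := isFiniteMeasure_restrict.2 (measure_closedBall_lt_top (μ := μ) (x := x) (r := t)).ne
  have hq₀ : 0 < q := by linarith
  rw [← ENNReal.mul_rpow_of_nonneg _ _ (by positivity), one_div, ENNReal.le_rpow_inv_iff hq₀]
  refine (laverage_rpow_le hg.aemeasurable hq).trans ?_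
  rw [setLAverage_eq, Measure.addHaar_closedBall_center, ENNReal.div_eq_inv_mul]
  gcongr
  exact Measure.restrict_le_self

lemma lintegral_setLAverage_closedBall_rpow_le (hg : Measurable g) (hq : 1 ≤ q) (hqp : q ≤ p)
    (ht : 0 < t) :
    (∫⁻ x, (⨍⁻ z in closedBall x t, g z ∂μ) ^ p ∂μ) ^ (1 / p) ≤
      (μ (closedBall 0 t))⁻¹ ^ (1 / q - 1 / p) * (∫⁻ z, g z ^ q ∂μ) ^ (1 / q) := by
  have hq₀ : 0 < q := by linarith
  have hp₀ : 0 < p := by linarith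
  have hpq : 0 ≤ p - q := sub_nonneg.2 hqp
  set Γ := ∫⁻ z, g z ^ q ∂μ
  set V := μ (closedBall (0 : E) t)
  have hfinite := fun x : E =>
    isFiniteMeasure_restrict.2 (measure_closedBall_lt_top (μ := μ) (x := x) (r := t)).ne
  set K := V⁻¹ ^ (1 / q) * Γ ^ (1 / q) with hK
  have hle : ∫⁻ x, (⨍⁻ z in closedBall x t, g z ∂μ) ^ p ∂μ ≤
      K ^ (p - q) * ∫⁻ z, g z ^ q ∂μ := by
    rw [← lintegral_setLAverage_closedBall μ (hg.pow_const q) ht, ← lintegral_const_mul _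
      ((measurable_setLAverage_closedBall μ (hg.pow_const q)).of_uncurry_left)]
    refine lintegral_mono fun x => ?_
    calc (⨍⁻ z in closedBall x t, g z ∂μ) ^ p
        = (⨍⁻ z in closedBall x t, g z ∂μ) ^ (p - q) * (⨍⁻ z in closedBall x t, g z ∂μ) ^ q := by
          rw [← ENNReal.rpow_add_of_nonneg _ _ hpq hq₀.le, sub_add_cancel]
      _ ≤ K ^ (p - q) * ⨍⁻ z in closedBall x t, g z ^ q ∂μ := by
          gcongr
          · exact setLAverage_closedBall_le μ hg hq x
          · exact laverage_rpow_le hg.aemeasurable hq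
  calc _ ≤ (K ^ (p - q) * Γ) ^ (1 / p) := by gcongr
    _ = V⁻¹ ^ (1 / q - 1 / p) * Γ ^ (1 / q) := by
        have hV : 1 / q * (p - q) * (1 / p) = 1 / q - 1 / p := by field_simp
        have hΓ : 1 / q - 1 / p + 1 / p = 1 / q := by ring
        have hV₀ : 0 ≤ 1 / q - 1 / p := by rw [← hV]; positivity
        rw [hK, ← ENNReal.mul_rpow_of_nonneg _ _ (by positivity), ← ENNReal.rpow_mul,
          ENNReal.mul_rpow_of_nonneg _ _ (by positivity), ← ENNReal.rpow_mul, hV,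
          ENNReal.mul_rpow_of_nonneg _ _ hV₀, mul_assoc,
          ← ENNReal.rpow_add_of_nonneg _ _ hV₀ (by positivity), hΓ]

lemma inv_measure_closedBall_mul_rpow {ρ : ℝ} (ht : 0 < t) (s : ℝ) (hs : 0 ≤ s) :
    (μ (closedBall 0 (t * ρ)))⁻¹ ^ s =
      (μ (closedBall (0 : E) ρ))⁻¹ ^ s * ENNReal.ofReal (t ^ (-(Module.finrank ℝ E * s))) := by
  rw [Measure.addHaar_closedBall_mul_of_pos μ 0 ht,
    ENNReal.mul_inv (by left; positivity) (by simp), mul_comm, ENNReal.mul_rpow_of_nonneg _ _ hs,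
    ← ENNReal.ofReal_inv_of_pos (by positivity), ENNReal.ofReal_rpow_of_pos (by positivity),
    Real.rpow_neg ht.le, Real.rpow_mul ht.le, Real.rpow_natCast,
    Real.inv_rpow (by positivity)]

lemma isScaleDecomposition_setLAverage (hg : Measurable g) (hq : 1 ≤ q) (hqp : q ≤ p) {U : Set E}
    {ρ R : ℝ} {C₀ : ℝ≥0∞} {h : E → ℝ≥0∞} (hh : AEMeasurable h (μ.restrict U)) (hρ : 0 < ρ)
    (hle : ∀ᵐ x ∂μ.restrict U,
      h x ≤ ∫⁻ t in Ioo 0 R, C₀ * ⨍⁻ z in closedBall x (t * ρ), g z ∂μ) :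
    IsScaleDecomposition (μ.restrict U) p (Module.finrank ℝ E * (1 / q))
      (Module.finrank ℝ E * (1 / q - 1 / p)) R
      (C₀ * ((μ (closedBall (0 : E) ρ))⁻¹ ^ (1 / q) +
          (μ (closedBall (0 : E) ρ))⁻¹ ^ (1 / q - 1 / p)) * (∫⁻ z, g z ^ q ∂μ) ^ (1 / q))
      (fun t x => C₀ * ⨍⁻ z in closedBall x (t * ρ), g z ∂μ) h where
  measurable := ((measurable_setLAverage_closedBall μ hg).comp
    ((measurable_fst.mul_const ρ).prodMk measurable_snd)).const_mul C₀
  apply_le t ht x := by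
    refine (mul_le_mul_right (setLAverage_closedBall_le μ hg hq x) C₀).trans ?_
    rw [inv_measure_closedBall_mul_rpow μ ht.1 _ (by positivity),
      mul_right_comm _ (ENNReal.ofReal _), ← mul_assoc, ← mul_assoc]
    gcongr
    exact le_self_add
  lintegral_rpow_le t ht := by
    have hp : 0 < p := by linarith
    have hpq : 0 ≤ 1 / q - 1 / p := sub_nonneg.2 (one_div_le_one_div_of_le (by linarith) hqp)
    have hmeas : Measurable fun x => (⨍⁻ z in closedBall x (t * ρ), g z ∂μ) ^ p :=
      (measurable_setLAverage_closedBall μ hg).of_uncurry_left.pow_const p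
    simp only [ENNReal.mul_rpow_of_nonneg _ _ hp.le]
    rw [lintegral_const_mul _ hmeas, ENNReal.mul_rpow_of_nonneg _ _ (by positivity),
      ← ENNReal.rpow_mul, mul_one_div_cancel hp.ne', ENNReal.rpow_one, mul_assoc C₀, mul_assoc C₀]
    gcongr
    calc _ ≤ (∫⁻ x, (⨍⁻ z in closedBall x (t * ρ), g z ∂μ) ^ p ∂μ) ^ (1 / p) := by
          gcongr; exact Measure.restrict_le_self
      _ ≤ _ := lintegral_setLAverage_closedBall_rpow_le μ hg hq hqp (mul_pos ht.1 hρ)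
      _ ≤ _ := by
          rw [inv_measure_closedBall_mul_rpow μ ht.1 _ hpq, mul_right_comm _ (ENNReal.ofReal _)]
          gcongr
          exact le_add_self
  aemeasurable := hh
  ae_le := hle

end BallAverages

section Dilation

variable {E F : Type*} [NormedAddCommGroup E] [NormedSpace ℝ E] [NormedAddCommGroup F]
  [NormedSpace ℝ F] {φ : E → ℝ} {x z : E} {s : ℝ}

/-- The function `φ` contracted towards `x` by the factor `s`, normalised to keep its integral. For
`s → 0` these form an approximate identity at `x`. -/
def dilate (x : E) (s : ℝ) (φ : E → ℝ) (z : E) : ℝ :=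
  s⁻¹ ^ Module.finrank ℝ E * φ (x + s⁻¹ • (z - x))

/-- The divergence of the vector field `z ↦ φ z • (z - x)`, which governs how `dilate x s φ` changes
with the scale `s`. -/
def radialDiv (x : E) (φ : E → ℝ) (z : E) : ℝ :=
  Module.finrank ℝ E * φ z + fderiv ℝ φ z (z - x)

@[simp]
lemma dilate_one (x : E) (φ : E → ℝ) : dilate x 1 φ = φ := by
  ext z; simp [dilate]

lemma hasFDerivAt_dilate (hφ : Differentiable ℝ φ) (x : E) (s : ℝ) (z : E) :
    HasFDerivAt (dilate x s φ)
      (s⁻¹ ^ Module.finrank ℝ E • s⁻¹ • fderiv ℝ φ (x + s⁻¹ • (z - x))) z := by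
  have hmap : HasFDerivAt (fun z : E => x + s⁻¹ • (z - x)) (s⁻¹ • ContinuousLinearMap.id ℝ E) z :=
    (((hasFDerivAt_id z).sub_const x).const_smul s⁻¹).const_add x
  refine (((hφ _).hasFDerivAt.comp z hmap).const_mul _).congr_fderiv ?_
  ext e
  simp

lemma radialDiv_dilate (hφ : Differentiable ℝ φ) :
    radialDiv x (dilate x s φ) = dilate x s (radialDiv x φ) := by
  ext z
  simp only [radialDiv, dilate, (hasFDerivAt_dilate hφ x s z).fderiv, add_sub_cancel_left, map_smul,
    smul_apply, smul_eq_mul]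
  ring

lemma hasDerivAt_dilate (hφ : Differentiable ℝ φ) (hs : s ≠ 0) :
    HasDerivAt (fun s => dilate x s φ z) (-(s⁻¹ * dilate x s (radialDiv x φ) z)) s := by
  have hpow : HasDerivAt (fun s : ℝ => s⁻¹ ^ Module.finrank ℝ E)
      (-(s⁻¹ * (Module.finrank ℝ E * s⁻¹ ^ Module.finrank ℝ E))) s := by
    refine ((hasDerivAt_inv hs).pow (Module.finrank ℝ E)).congr_deriv ?_
    rcases Module.finrank ℝ E with _ | d
    · simp
    · simp [pow_succ]; field_simp
  have hmap : HasDerivAt (fun s : ℝ => x + s⁻¹ • (z - x)) (-(s ^ 2)⁻¹ • (z - x)) s :=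
    ((hasDerivAt_inv hs).smul_const (z - x)).const_add x
  refine (hpow.mul ((hφ _).hasFDerivAt.comp_hasDerivAt s hmap)).congr_deriv ?_
  simp only [radialDiv, dilate, add_sub_cancel_left, map_smul, smul_eq_mul, Function.comp_apply]
  field_simp
  ring

lemma contDiff_dilate {n : WithTop ℕ∞} (hφ : ContDiff ℝ n φ) (x : E) (s : ℝ) :
    ContDiff ℝ n (dilate x s φ) := by
  unfold dilate
  fun_prop

lemma continuous_radialDiv (hφ : ContDiff ℝ 1 φ) (x : E) : Continuous (radialDiv x φ) := by
  have := hφ.continuous_fderiv one_ne_zero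
  have := hφ.continuous
  unfold radialDiv
  fun_prop

lemma sum_fderiv_mul_coord [FiniteDimensional ℝ E] {ι : Type*} [Fintype ι] (b : Module.Basis ι ℝ E)
    (hφ : Differentiable ℝ φ) (x z : E) :
    ∑ i, fderiv ℝ (fun z => φ z * (b.coord i).toContinuousLinearMap (z - x)) z (b i) =
      radialDiv x φ z := by
  have hderiv : ∀ i, fderiv ℝ (fun z => φ z * (b.coord i).toContinuousLinearMap (z - x)) z (b i) =
      φ z + b.coord i (z - x) * fderiv ℝ φ z (b i) := fun i => by
    have hcoord := ((b.coord i).toContinuousLinearMap.hasFDerivAt (x := z - x)).comp z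
      ((hasFDerivAt_id z).sub_const x)
    have hmul := ((hφ z).hasFDerivAt.mul hcoord).fderiv
    refine (congrArg (· (b i)) hmul).trans ?_
    simp
  simp only [hderiv, Finset.sum_add_distrib, Finset.sum_const, Finset.card_univ, radialDiv,
    Module.finrank_eq_card_basis b, nsmul_eq_mul]
  congr 1
  conv_rhs => rw [← b.sum_repr (z - x)]
  simp only [map_sum, map_smul, smul_eq_mul, Module.Basis.coord_apply]

lemma hasCompactSupport_radialDiv (hφ : HasCompactSupport φ) (x : E) :
    HasCompactSupport (radialDiv x φ) :=
  hφ.mono' fun z hz => by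
    by_contra hzφ
    refine hz ?_
    simp only [radialDiv, image_eq_zero_of_notMem_tsupport hzφ, fderiv_of_notMem_tsupport ℝ hzφ,
      mul_zero, zero_apply, add_zero]

lemma tsupport_dilate_subset (x : E) (s : ℝ) (φ : E → ℝ) :
    tsupport (dilate x s φ) ⊆ (fun z => x + s⁻¹ • (z - x)) ⁻¹' tsupport φ :=
  (tsupport_mul_subset_right).trans (tsupport_comp_subset_preimage φ (by fun_prop))

lemma hasCompactSupport_dilate (hφ : HasCompactSupport φ) (hs : s ≠ 0) (x : E) :
    HasCompactSupport (dilate x s φ) := by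
  have himage : IsCompact ((fun y => x + s • (y - x)) '' tsupport φ) :=
    hφ.isCompact.image (by fun_prop)
  refine himage.of_isClosed_subset (isClosed_tsupport _) fun z hz => ?_
  exact ⟨_, tsupport_dilate_subset x s φ hz, by simp [smul_smul, hs]⟩

lemma tsupport_dilate_subset_of_convex {U : Set E} (hU : Convex ℝ U) (hφU : tsupport φ ⊆ U)
    (hx : x ∈ U) (hs₀ : 0 < s) (hs₁ : s ≤ 1) : tsupport (dilate x s φ) ⊆ U := fun z hz => by
  have hy := hφU (tsupport_dilate_subset x s φ hz)
  have hz' := hU.add_smul_sub_mem hx hy ⟨hs₀.le, hs₁⟩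
  rwa [add_sub_cancel_left, smul_smul, mul_inv_cancel₀ hs₀.ne', one_smul, add_sub_cancel] at hz'

lemma abs_dilate_le {K : ℝ} (hK : ∀ y, |φ y| ≤ K) (hs : 0 ≤ s) (x z : E) :
    |dilate x s φ z| ≤ s⁻¹ ^ Module.finrank ℝ E * K := by
  rw [dilate, abs_mul, abs_of_nonneg (by positivity)]
  gcongr
  exact hK _

lemma mem_closedBall_of_dilate_ne_zero {ρ : ℝ} (hρ : tsupport φ ⊆ closedBall x ρ) (hs : 0 < s)
    (hz : dilate x s φ z ≠ 0) : z ∈ closedBall x (s * ρ) := by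
  have hy := hρ (subset_tsupport φ (right_ne_zero_of_mul hz))
  rw [mem_closedBall_iff_norm, add_sub_cancel_left, norm_smul, norm_inv, Real.norm_of_nonneg hs.le,
    inv_mul_le_iff₀ hs] at hy
  exact mem_closedBall_iff_norm.2 hy

lemma enorm_smul_dilate_smul_apply_le {K ρ : ℝ} (hK : ∀ y, |φ y| ≤ K)
    (hρ : tsupport φ ⊆ closedBall x ρ) (hs : 0 < s) (A : E →L[ℝ] F) (z : E) :
    ‖s⁻¹ • dilate x s φ z • A (z - x)‖ₑ ≤ (closedBall x (s * ρ)).indicator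
      (fun _ => ENNReal.ofReal (s⁻¹ ^ Module.finrank ℝ E * (K * ρ)) * ‖A‖ₑ) z := by
  have hK₀ : 0 ≤ K := (abs_nonneg _).trans (hK x)
  rcases eq_or_ne (dilate x s φ z) 0 with hz | hz
  · simp [hz]
  have hzx := mem_closedBall_of_dilate_ne_zero hρ hs hz
  rw [indicator_of_mem hzx, ← ofReal_norm, ← ofReal_norm, ← ENNReal.ofReal_mul' (norm_nonneg _)]
  refine ENNReal.ofReal_le_ofReal ?_
  calc ‖s⁻¹ • dilate x s φ z • A (z - x)‖
      = s⁻¹ * (|dilate x s φ z| * ‖A (z - x)‖) := by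
        rw [norm_smul, norm_smul, norm_inv, Real.norm_of_nonneg hs.le, Real.norm_eq_abs]
    _ ≤ s⁻¹ * (s⁻¹ ^ Module.finrank ℝ E * K * (‖A‖ * (s * ρ))) := by
        gcongr
        · exact abs_dilate_le hK hs.le x z
        · exact A.le_opNorm_of_le (mem_closedBall_iff_norm.1 hzx)
    _ = s⁻¹ ^ Module.finrank ℝ E * (K * ρ) * ‖A‖ := by
        field_simp

lemma intervalIntegral_inv_mul_dilate_radialDiv (hφ : ContDiff ℝ 1 φ) {a : ℝ} (ha₀ : 0 < a)
    (ha₁ : a ≤ 1) (x z : E) :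
    ∫ s in a..1, s⁻¹ * dilate x s (radialDiv x φ) z = dilate x a φ z - φ z := by
  have hne : ∀ s ∈ uIcc a 1, s ≠ 0 := fun s hs => by
    rw [uIcc_of_le ha₁] at hs; exact (ha₀.trans_le hs.1).ne'
  have hcont : ContinuousOn (fun s => -(s⁻¹ * dilate x s (radialDiv x φ) z)) (uIcc a 1) := by
    have hχ := continuous_radialDiv hφ x
    unfold dilate
    fun_prop (disch := assumption)
  have hftc := intervalIntegral.integral_eq_sub_of_hasDerivAt
    (fun s hs => hasDerivAt_dilate (x := x) (z := z) (hφ.differentiable one_ne_zero) (hne s hs))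
    hcont.intervalIntegrable
  rw [intervalIntegral.integral_neg, dilate_one] at hftc
  linarith

variable [MeasurableSpace E] [BorelSpace E]

lemma integral_dilate [FiniteDimensional ℝ E] (μ : Measure E) [μ.IsAddHaarMeasure] (hs : 0 < s)
    (x : E) (φ : E → ℝ) : ∫ z, dilate x s φ z ∂μ = ∫ z, φ z ∂μ := by
  simp only [dilate]
  rw [integral_const_mul, integral_sub_right_eq_self (fun y => φ (x + s⁻¹ • y)) x,
    Measure.integral_comp_inv_smul_of_nonneg μ (fun y => φ (x + y)) hs.le,
    integral_add_left_eq_self, smul_eq_mul, ← mul_assoc, ← mul_pow, inv_mul_cancel₀ hs.ne', one_pow,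
    one_mul]

variable [SecondCountableTopology E] {ν : Measure E} [SFinite ν] {u : E → F}

lemma integrable_inv_mul_dilate_smul {χ : E → ℝ} (hχ : Continuous χ) (hχc : HasCompactSupport χ)
    (hu : Integrable u ν) {a : ℝ} (ha₀ : 0 < a) (b : ℝ) (x : E) :
    Integrable (Function.uncurry fun s z => (s⁻¹ * dilate x s χ z) • u z)
      ((volume.restrict (Ioc a b)).prod ν) := by
  obtain ⟨K, hK⟩ := hχ.bounded_above_of_compact_support hχc
  have hmeas : Measurable fun y : ℝ × E => y.1⁻¹ * dilate x y.1 χ y.2 := by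
    have := hχ.measurable
    unfold dilate
    fun_prop
  refine (hu.comp_snd _).bdd_smul (a⁻¹ * (a⁻¹ ^ Module.finrank ℝ E * K))
    hmeas.aestronglyMeasurable ?_
  filter_upwards [Measure.quasiMeasurePreserving_fst.ae (ae_restrict_mem measurableSet_Ioc)]
    with y hy
  have hy₀ : 0 < y.1 := ha₀.trans hy.1
  have hK₀ : 0 ≤ K := (norm_nonneg _).trans (hK x)
  rw [norm_mul, norm_inv, Real.norm_of_nonneg hy₀.le]
  refine (mul_le_mul_of_nonneg_left (abs_dilate_le hK hy₀.le x y.2) (by positivity)).trans ?_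
  have := hy.1.le
  gcongr

variable [CompleteSpace F]

lemma integral_dilate_smul_sub (hφ : ContDiff ℝ 1 φ) (hφc : HasCompactSupport φ)
    (hu : Integrable u ν) {a : ℝ} (ha₀ : 0 < a) (ha₁ : a ≤ 1) (x : E) :
    ∫ z, dilate x a φ z • u z ∂ν - ∫ z, φ z • u z ∂ν =
      ∫ s in a..1, s⁻¹ • ∫ z, dilate x s (radialDiv x φ) z • u z ∂ν := by
  have hint := integrable_inv_mul_dilate_smul (continuous_radialDiv hφ x)
    (hasCompactSupport_radialDiv hφc x) hu ha₀ 1 x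
  rw [← uIoc_of_le ha₁] at hint
  have hint_dilate : Integrable (fun z => dilate x a φ z • u z) ν :=
    hu.locallyIntegrable.integrable_smul_left_of_hasCompactSupport
      (contDiff_dilate hφ x a).continuous (hasCompactSupport_dilate hφc ha₀.ne' x)
  have hint_one : Integrable (fun z => φ z • u z) ν :=
    hu.locallyIntegrable.integrable_smul_left_of_hasCompactSupport hφ.continuous hφc
  simp only [← integral_smul, smul_smul]
  rw [intervalIntegral_integral_swap hint, ← integral_sub hint_dilate hint_one]
  refine integral_congr_ae (ae_of_all _ fun z => ?_)
  simp only [intervalIntegral.integral_smul_const,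
    intervalIntegral_inv_mul_dilate_radialDiv hφ ha₀ ha₁, sub_smul]

end Dilation

section WeakDerivative

variable {E F : Type*} [NormedAddCommGroup E] [NormedSpace ℝ E] [FiniteDimensional ℝ E]
  [MeasurableSpace E] [BorelSpace E] [NormedAddCommGroup F] [NormedSpace ℝ F]
  {μ : Measure E} {U : Set E} {u : E → F} {D : E → E →L[ℝ] F} {φ : E → ℝ} {x : E}

/-- The integrable field `D` is the distributional derivative on `U` of the integrable function
`u`. -/
structure HasWeakFDerivOn (μ : Measure E) (D : E → E →L[ℝ] F) (u : E → F) (U : Set E) : Prop where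
  integrableOn : IntegrableOn u U μ
  integrableOn_fderiv : IntegrableOn D U μ
  integral_smul_apply : ∀ φ : E → ℝ, ContDiff ℝ (⊤ : ℕ∞) φ → HasCompactSupport φ → tsupport φ ⊆ U →
    ∀ e : E, ∫ z in U, φ z • D z e ∂μ = -∫ z in U, fderiv ℝ φ z e • u z ∂μ

lemma HasWeakFDerivOn.integral_radialDiv_smul (hu : HasWeakFDerivOn μ D u U)
    (hφ : ContDiff ℝ (⊤ : ℕ∞) φ) (hφc : HasCompactSupport φ) (hφU : tsupport φ ⊆ U) (x : E) :
    ∫ z in U, radialDiv x φ z • u z ∂μ = -∫ z in U, φ z • D z (z - x) ∂μ := by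
  set b := Module.finBasis ℝ E
  set ψ : Fin (Module.finrank ℝ E) → E → ℝ :=
    fun i z => φ z * (b.coord i).toContinuousLinearMap (z - x)
  have hψ : ∀ i, ContDiff ℝ (⊤ : ℕ∞) (ψ i) := fun i => by fun_prop
  have hψc : ∀ i, HasCompactSupport (ψ i) := fun i => hφc.mul_right
  have hψU : ∀ i, tsupport (ψ i) ⊆ U := fun i => tsupport_mul_subset_left.trans hφU
  have hint_u : ∀ i, IntegrableOn (fun z => fderiv ℝ (ψ i) z (b i) • u z) U μ := fun i =>
    hu.integrableOn.locallyIntegrable.integrable_smul_left_of_hasCompactSupport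
      (((hψ i).continuous_fderiv (by simp)).clm_apply continuous_const) ((hψc i).fderiv_apply ℝ _)
  have hint_D : ∀ i, IntegrableOn (fun z => ψ i z • D z (b i)) U μ := fun i =>
    LocallyIntegrable.integrable_smul_left_of_hasCompactSupport
      (hu.integrableOn_fderiv.apply_continuousLinearMap (b i)).locallyIntegrable
      (hψ i).continuous (hψc i)
  have hD : ∀ z, φ z • D z (z - x) = ∑ i, ψ i z • D z (b i) := fun z => by
    conv_lhs => rw [← b.sum_repr (z - x)]
    simp only [map_sum, map_smul, Finset.smul_sum, smul_smul]
    rfl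
  simp only [← sum_fderiv_mul_coord b (hφ.differentiable (by simp)), Finset.sum_smul, hD]
  rw [integral_finsetSum _ fun i _ => hint_u i, integral_finsetSum _ fun i _ => hint_D i,
    ← Finset.sum_neg_distrib]
  exact Finset.sum_congr rfl fun i _ => by
    rw [hu.integral_smul_apply _ (hψ i) (hψc i) (hψU i), neg_neg]

lemma HasWeakFDerivOn.enorm_smul_integral_dilate_radialDiv_le [μ.IsAddHaarMeasure]
    (hu : HasWeakFDerivOn μ D u U) (hU : Convex ℝ U) (hφ : ContDiff ℝ (⊤ : ℕ∞) φ)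
    (hφc : HasCompactSupport φ) (hφU : tsupport φ ⊆ U) {K ρ s : ℝ} (hK : ∀ z, |φ z| ≤ K)
    (hxU : x ∈ U) (hρ₀ : 0 < ρ)
    (hρ : tsupport φ ⊆ closedBall x ρ) {g : E → ℝ≥0∞}
    (hg : ∀ᵐ z ∂μ.restrict U, ‖D z‖ₑ ≤ g z) (hs₀ : 0 < s) (hs₁ : s ≤ 1) :
    ‖s⁻¹ • ∫ z in U, dilate x s (radialDiv x φ) z • u z ∂μ‖ₑ ≤
      ENNReal.ofReal (K * ρ) * μ (closedBall 0 ρ) * ⨍⁻ z in closedBall x (s * ρ), g z ∂μ := by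
  have hK₀ : 0 ≤ K := (abs_nonneg _).trans (hK x)
  have hV₀ : μ (closedBall (0 : E) ρ) ≠ 0 := (measure_closedBall_pos μ 0 hρ₀).ne'
  have hV : μ (closedBall (0 : E) ρ) ≠ ∞ := measure_closedBall_lt_top.ne
  rw [← radialDiv_dilate (hφ.differentiable (by simp)),
    hu.integral_radialDiv_smul (contDiff_dilate hφ x s) (hasCompactSupport_dilate hφc hs₀.ne' x)
      (tsupport_dilate_subset_of_convex hU hφU hxU hs₀ hs₁), smul_neg, enorm_neg, ← integral_smul]
  calc _ ≤ ∫⁻ z in U, ‖s⁻¹ • dilate x s φ z • D z (z - x)‖ₑ ∂μ :=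
        enorm_integral_le_lintegral_enorm _
    _ ≤ ∫⁻ z in U, (closedBall x (s * ρ)).indicator
          (fun z => ENNReal.ofReal (s⁻¹ ^ Module.finrank ℝ E * (K * ρ)) * g z) z ∂μ := by
        refine lintegral_mono_ae (hg.mono fun z hz => ?_)
        refine (enorm_smul_dilate_smul_apply_le hK hρ hs₀ (D z) z).trans (indicator_le_indicator ?_)
        gcongr
    _ ≤ ENNReal.ofReal (s⁻¹ ^ Module.finrank ℝ E * (K * ρ)) *
          ∫⁻ z in closedBall x (s * ρ), g z ∂μ := by
        rw [← lintegral_const_mul' _ _ ENNReal.ofReal_ne_top,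
          ← lintegral_indicator measurableSet_closedBall]
        exact lintegral_mono' Measure.restrict_le_self le_rfl
    _ = _ := by
        rw [setLAverage_eq, Measure.addHaar_closedBall_mul_of_pos μ x hs₀, inv_pow, mul_comm (_⁻¹),
          ENNReal.ofReal_mul (by positivity), ENNReal.ofReal_inv_of_pos (by positivity),
          div_eq_mul_inv, ENNReal.mul_inv (by left; positivity) (by simp), mul_mul_mul_comm,
          mul_left_comm (μ _), ENNReal.mul_inv_cancel hV₀ hV, mul_one, mul_right_comm]

lemma ae_tendsto_integral_dilate_smul [CompleteSpace F] [μ.IsAddHaarMeasure] (hφ : Continuous φ)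
    (hφc : HasCompactSupport φ) (hφ₁ : ∫ z, φ z ∂μ = 1) (hu : LocallyIntegrable u μ) :
    ∀ᵐ x ∂μ, Tendsto (fun s => ∫ z, dilate x s φ z • u z ∂μ) (𝓝[>] 0) (𝓝 (u x)) := by
  filter_upwards [IsUnifLocDoublingMeasure.ae_tendsto_average_norm_sub μ hu 1] with x hx
  obtain ⟨ρ, hρ₀, hρ⟩ : ∃ ρ, 0 < ρ ∧ tsupport φ ⊆ closedBall x ρ := by
    obtain ⟨ρ, hρ⟩ := hφc.isCompact.isBounded.subset_closedBall x
    exact ⟨max ρ 1, by positivity, hρ.trans (closedBall_subset_closedBall (le_max_left _ _))⟩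
  obtain ⟨K, hK⟩ := hφ.bounded_above_of_compact_support hφc
  have hscale : Tendsto (fun s : ℝ => s * ρ) (𝓝[>] 0) (𝓝[>] 0) := by
    refine tendsto_nhdsWithin_iff.2 ⟨?_, ?_⟩
    · simpa using ((continuous_mul_const ρ).tendsto 0).mono_left nhdsWithin_le_nhds
    · filter_upwards [self_mem_nhdsWithin] with s hs using mul_pos hs hρ₀
  refine tendsto_integral_smul_of_tendsto_average_norm_sub (a := fun s => closedBall x (s * ρ))
    (K * μ.real (closedBall 0 ρ)) (hx (fun _ => x) _ hscale ?_) ?_ ?_ ?_ ?_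
  · filter_upwards [self_mem_nhdsWithin] with s hs
    exact mem_closedBall_self (by rw [one_mul]; exact (mul_pos hs hρ₀).le)
  · exact Eventually.of_forall fun s => hu.integrableOn_isCompact (isCompact_closedBall _ _)
  · refine tendsto_const_nhds.congr' ?_
    filter_upwards [self_mem_nhdsWithin] with s hs using by rw [integral_dilate μ hs, hφ₁]
  · filter_upwards [self_mem_nhdsWithin] with s hs z hz
    exact mem_closedBall_of_dilate_ne_zero hρ hs hz
  · filter_upwards [self_mem_nhdsWithin] with s hs z
    have hs₀ : 0 < s := hs
    refine (abs_dilate_le hK hs₀.le x z).trans_eq ?_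
    rw [inv_pow, measureReal_def, measureReal_def, Measure.addHaar_closedBall_mul_of_pos μ x hs₀,
      ENNReal.toReal_mul, ENNReal.toReal_ofReal (by positivity)]
    have : (μ (closedBall (0 : E) ρ)).toReal ≠ 0 :=
      (ENNReal.toReal_pos (measure_closedBall_pos μ 0 hρ₀).ne' measure_closedBall_lt_top.ne).ne'
    field_simp

lemma HasWeakFDerivOn.ae_enorm_sub_integral_smul_le [CompleteSpace F] [μ.IsAddHaarMeasure]
    (hu : HasWeakFDerivOn μ D u U) (hU : Convex ℝ U) (hU_meas : MeasurableSet U)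
    (hφ : ContDiff ℝ (⊤ : ℕ∞) φ) (hφc : HasCompactSupport φ) (hφU : tsupport φ ⊆ U)
    (hφ₁ : ∫ z, φ z ∂μ = 1) {K ρ : ℝ} (hK : ∀ z, |φ z| ≤ K)
    (hρ₀ : 0 < ρ) (hρ : ∀ x ∈ U, tsupport φ ⊆ closedBall x ρ) {g : E → ℝ≥0∞}
    (hg : ∀ᵐ z ∂μ.restrict U, ‖D z‖ₑ ≤ g z) :
    ∀ᵐ x ∂μ.restrict U, ‖u x - ∫ z in U, φ z • u z ∂μ‖ₑ ≤ ∫⁻ s in Ioo 0 1,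
      ENNReal.ofReal (K * ρ) * μ (closedBall 0 ρ) * ⨍⁻ z in closedBall x (s * ρ), g z ∂μ := by
  have hlim := ae_tendsto_integral_dilate_smul hφ.continuous hφc hφ₁
    ((integrable_indicator_iff hU_meas).2 hu.integrableOn).locallyIntegrable
  filter_upwards [ae_restrict_of_ae hlim, ae_restrict_mem hU_meas] with x hx hxU
  simp only [← indicator_smul, integral_indicator hU_meas, indicator_of_mem hxU] at hx
  refine le_of_tendsto (hx.sub_const (∫ z in U, φ z • u z ∂μ)).enorm ?_
  filter_upwards [Ioo_mem_nhdsGT one_pos] with a ha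
  rw [integral_dilate_smul_sub (hφ.of_le (by simp)) hφc hu.integrableOn ha.1 ha.2.le,
    intervalIntegral.integral_of_le ha.2.le, ← restrict_Ioo_eq_restrict_Ioc]
  refine (enorm_integral_le_lintegral_enorm _).trans ?_
  refine (setLIntegral_mono' measurableSet_Ioo fun s hs => ?_).trans
    (lintegral_mono_set (Ioo_subset_Ioo_left ha.1.le))
  exact hu.enorm_smul_integral_dilate_radialDiv_le hU hφ hφc hφU hK hxU hρ₀ (hρ x hxU) hg
    (ha.1.trans hs.1) hs.2.le

end WeakDerivative

section Interpolation

lemma div_mul_le_of_le_mul {d p q α β : ℝ} (hd : 0 < d) (hp : 0 < p) (hq : 0 < q) (hβ : 0 < β)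
    (hle : α ≤ (q - p + p * q / d) * β) :
    α / (q * β) ≤ (1 - d * (1 / q - 1 / p)) / (d * (1 / q) - d * (1 / q - 1 / p)) := by
  have hab : d * (1 / q) - d * (1 / q - 1 / p) = d / p := by ring
  rw [hab, div_le_div_iff₀ (by positivity) (by positivity)]
  refine (mul_le_mul_of_nonneg_right hle (by positivity)).trans_eq ?_
  field_simp
  ring

section

variable {E : Type*} [NormedAddCommGroup E] [NormedSpace ℝ E] [FiniteDimensional ℝ E]
  [MeasurableSpace E] [BorelSpace E] (μ : Measure E) [μ.IsAddHaarMeasure] {U : Set E}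
  {p q α β : ℝ}

lemma exists_setLIntegral_rpow_le_of_ae_le_setLAverage (hU : μ U ≠ ∞) (hp : 1 < p) (hq : 1 ≤ q)
    (hqp : q ≤ p) (hqE : q < Module.finrank ℝ E) (hα : 0 < α) (hβ : 0 < β)
    (hαβ : (p - 1) * α + q * β = p) (hle : α ≤ (q - p + p * q / Module.finrank ℝ E) * β)
    {C₀ : ℝ≥0∞} (hC₀ : C₀ ≠ ∞) {ρ : ℝ} (hρ : 0 < ρ) (R : ℝ) :
    ∃ C : ℝ≥0∞, C ≠ ∞ ∧ ∀ g h : E → ℝ≥0∞, Measurable g → AEMeasurable h (μ.restrict U) →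
      (∀ᵐ x ∂μ.restrict U, h x ≤ ∫⁻ t in Ioo 0 R, C₀ * ⨍⁻ z in closedBall x (t * ρ), g z ∂μ) →
      ∫⁻ x in U, h x ^ p ∂μ ≤ C * ((∫⁻ x in U, h x ^ (p - 1) ∂μ) ^ α * (∫⁻ z, g z ^ q ∂μ) ^ β) := by
  have := isFiniteMeasure_restrict.2 hU
  set d : ℝ := (Module.finrank ℝ E : ℝ)
  have hd : 0 < d := by linarith
  have hq₀ : 0 < q := by linarith
  have hp₀ : 0 < p := by linarith
  have hpos : 0 < q - p + p * q / d := pos_of_mul_pos_left (hα.trans_le hle) hβ.le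
  have ha : 1 < d * (1 / q) := by rwa [mul_one_div, one_lt_div hq₀]
  have hb : d * (1 / q - 1 / p) < 1 := by
    have : 1 - d * (1 / q - 1 / p) = (q - p + p * q / d) * (d / (p * q)) := by field_simp; ring
    have : 0 < (q - p + p * q / d) * (d / (p * q)) := by positivity
    linarith
  have hσ : 1 - (1 - 1 / p) * (1 - α / (q * β)) = (q * β)⁻¹ := by
    field_simp
    linarith
  obtain ⟨C, hC, hmain⟩ := exists_lintegral_rpow_le_of_isScaleDecomposition (ν := μ.restrict U)
    hp ha hb (by positivity)
    (div_mul_le_of_le_mul (d := d) hd hp₀ hq₀ hβ hle) R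
  set V := μ (closedBall (0 : E) ρ)
  have hV₀ : V ≠ 0 := (measure_closedBall_pos μ 0 hρ).ne'
  set C₁ := C₀ * (V⁻¹ ^ (1 / q) + V⁻¹ ^ (1 / q - 1 / p))
  have hpq : 0 ≤ 1 / q - 1 / p := sub_nonneg.2 (one_div_le_one_div_of_le hq₀ hqp)
  refine ⟨(C * C₁) ^ (q * β), by finiteness, fun g h hg hh hgh => ?_⟩
  have hdecomp := hmain _ _ _ (isScaleDecomposition_setLAverage μ hg hq hqp hh hρ hgh)
  rw [hσ, ENNReal.rpow_inv_le_iff (by positivity)] at hdecomp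
  refine hdecomp.trans_eq ?_
  have hβq : 1 / q * (q * β) = β := by field_simp
  have hαq : α / (q * β) * (q * β) = α := by field_simp
  rw [mul_assoc C₁, ← mul_assoc C, ENNReal.mul_rpow_of_nonneg _ _ (by positivity),
    ENNReal.mul_rpow_of_nonneg (_ ^ (1 / q)) _ (by positivity), ← ENNReal.rpow_mul,
    ← ENNReal.rpow_mul, hβq, hαq, mul_comm (_ ^ β)]

end

section

variable {Ω F : Type*} [MeasurableSpace Ω] {ν : Measure Ω} [IsFiniteMeasure ν]
  [NormedAddCommGroup F] {p : ℝ} {u : Ω → F}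

lemma lintegral_enorm_sub_rpow_le (hp : 1 ≤ p) (hu : AEStronglyMeasurable u ν)
    {A : ℝ≥0∞} {c : F} (hc : ‖c‖ₑ ≤ A * ⨍⁻ x, ‖u x‖ₑ ∂ν) :
    ∫⁻ x, ‖u x - c‖ₑ ^ p ∂ν ≤ 2 ^ (p - 1) * (1 + A ^ p) * ∫⁻ x, ‖u x‖ₑ ^ p ∂ν := by
  have hp₀ : 0 ≤ p := by linarith
  have hc_rpow : ‖c‖ₑ ^ p * ν univ ≤ A ^ p * ∫⁻ x, ‖u x‖ₑ ^ p ∂ν := calc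
    ‖c‖ₑ ^ p * ν univ ≤ (A * ⨍⁻ x, ‖u x‖ₑ ∂ν) ^ p * ν univ := by gcongr
    _ = A ^ p * ((⨍⁻ x, ‖u x‖ₑ ∂ν) ^ p * ν univ) := by
        rw [ENNReal.mul_rpow_of_nonneg _ _ hp₀, mul_assoc]
    _ ≤ A ^ p * ((⨍⁻ x, ‖u x‖ₑ ^ p ∂ν) * ν univ) := by
        gcongr
        exact laverage_rpow_le hu.enorm hp
    _ = A ^ p * ∫⁻ x, ‖u x‖ₑ ^ p ∂ν := by rw [mul_comm _ (ν univ), measure_mul_laverage]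
  calc ∫⁻ x, ‖u x - c‖ₑ ^ p ∂ν ≤ ∫⁻ x, 2 ^ (p - 1) * (‖u x‖ₑ ^ p + ‖c‖ₑ ^ p) ∂ν := by
        refine lintegral_mono fun x => ?_
        exact (ENNReal.rpow_le_rpow enorm_sub_le hp₀).trans
          (ENNReal.rpow_add_le_mul_rpow_add_rpow _ _ hp)
    _ = 2 ^ (p - 1) * (∫⁻ x, ‖u x‖ₑ ^ p ∂ν + ‖c‖ₑ ^ p * ν univ) := by
        rw [lintegral_const_mul' _ _ (ENNReal.rpow_ne_top_of_nonneg (by linarith) (by simp)),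
          lintegral_add_right _ measurable_const, lintegral_const]
    _ ≤ 2 ^ (p - 1) * (∫⁻ x, ‖u x‖ₑ ^ p ∂ν + A ^ p * ∫⁻ x, ‖u x‖ₑ ^ p ∂ν) := by gcongr
    _ = _ := by ring

variable [NormedSpace ℝ F]

lemma average_sub_const [CompleteSpace F] [NeZero ν] (hu : Integrable u ν) (c : F) :
    ⨍ x, (u x - c) ∂ν = (⨍ x, u x ∂ν) - c := by
  have hint := hu.smul_measure (ENNReal.inv_ne_top.2 (NeZero.ne (ν univ)))
  rw [average, integral_sub hint (integrable_const c)]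
  exact congrArg _ (average_const ν c)

lemma enorm_integral_smul_le {φ : Ω → ℝ} {K : ℝ} (hφ : ∀ x, ‖φ x‖ ≤ K) :
    ‖∫ x, φ x • u x ∂ν‖ₑ ≤ ENNReal.ofReal K * ν univ * ⨍⁻ x, ‖u x‖ₑ ∂ν := by
  rw [mul_assoc, measure_mul_laverage, ← lintegral_const_mul' _ _ ENNReal.ofReal_ne_top]
  refine (enorm_integral_le_lintegral_enorm _).trans (lintegral_mono fun x => ?_)
  rw [enorm_smul, ← ofReal_norm]
  gcongr
  exact hφ x

end

variable {E F : Type*} [NormedAddCommGroup E] [NormedSpace ℝ E] [FiniteDimensional ℝ E]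
  [MeasurableSpace E] [BorelSpace E] [NormedAddCommGroup F] [NormedSpace ℝ F]
  (μ : Measure E) [μ.IsAddHaarMeasure] {U : Set E} {p q α β : ℝ}

lemma exists_contDiff_tsupport_subset_integral_eq_one (hU : IsOpen U) (hU_nonempty : U.Nonempty) :
    ∃ φ : E → ℝ, ContDiff ℝ (⊤ : ℕ∞) φ ∧ HasCompactSupport φ ∧ tsupport φ ⊆ U ∧
      ∫ z, φ z ∂μ = 1 := by
  obtain ⟨x, hx⟩ := hU_nonempty
  obtain ⟨ε, hε, hεU⟩ := Metric.isOpen_iff.1 hU x hx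
  let b : ContDiffBump x := ⟨ε / 4, ε / 2, by positivity, by linarith⟩
  refine ⟨b.normed μ, b.contDiff_normed, b.hasCompactSupport_normed, ?_, b.integral_normed⟩
  rw [b.tsupport_normed_eq]
  exact (closedBall_subset_ball (by simp only [b]; linarith)).trans hεU

lemma ofReal_integral_norm_rpow {Ω G : Type*} [MeasurableSpace Ω] {ν : Measure Ω}
    [NormedAddCommGroup G] {f : Ω → G} {s : ℝ} (hs : 0 ≤ s)
    (hf : Integrable (fun x => ‖f x‖ ^ s) ν) :
    ENNReal.ofReal (∫ x, ‖f x‖ ^ s ∂ν) = ∫⁻ x, ‖f x‖ₑ ^ s ∂ν := by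
  rw [ofReal_integral_eq_lintegral_ofReal hf (ae_of_all _ fun x => by positivity)]
  simp only [← ENNReal.ofReal_rpow_of_nonneg (norm_nonneg _) hs, ofReal_norm]

variable [CompleteSpace F]

theorem exists_setLIntegral_enorm_sub_integral_smul_rpow_le {φ : E → ℝ} (hU : Convex ℝ U)
    (hU_meas : MeasurableSet U) (hU_bdd : IsBounded U) (hφ : ContDiff ℝ (⊤ : ℕ∞) φ)
    (hφc : HasCompactSupport φ) (hφU : tsupport φ ⊆ U) (hφ₁ : ∫ z, φ z ∂μ = 1)
    (hp : 1 < p) (hq : 1 ≤ q) (hqp : q ≤ p) (hqE : q < Module.finrank ℝ E) (hα : 0 < α) (hβ : 0 < β)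
    (hαβ : (p - 1) * α + q * β = p) (hle : α ≤ (q - p + p * q / Module.finrank ℝ E) * β) :
    ∃ C : ℝ≥0∞, C ≠ ∞ ∧ ∀ (u : E → F) (D : E → E →L[ℝ] F), HasWeakFDerivOn μ D u U →
      ∫⁻ x in U, ‖u x - ∫ z in U, φ z • u z ∂μ‖ₑ ^ p ∂μ ≤
        C * ((∫⁻ x in U, ‖u x - ∫ z in U, φ z • u z ∂μ‖ₑ ^ (p - 1) ∂μ) ^ α *
          (∫⁻ x in U, ‖D x‖ₑ ^ q ∂μ) ^ β) := by
  obtain ⟨K, hK⟩ := hφ.continuous.bounded_above_of_compact_support hφc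
  obtain ⟨ρ, hρ₀, hρ⟩ : ∃ ρ, 0 < ρ ∧ ∀ x ∈ U, U ⊆ closedBall x ρ := by
    refine ⟨diam U + 1, by positivity, fun x hx y hy => ?_⟩
    exact (dist_le_diam_of_mem hU_bdd hy hx).trans (by linarith)
  obtain ⟨C, hC, hmain⟩ := exists_setLIntegral_rpow_le_of_ae_le_setLAverage μ
    hU_bdd.measure_lt_top.ne hp hq hqp hqE hα hβ hαβ hle
    (C₀ := ENNReal.ofReal (K * ρ) * μ (closedBall 0 ρ))
    (ENNReal.mul_ne_top ENNReal.ofReal_ne_top measure_closedBall_lt_top.ne) hρ₀ 1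
  refine ⟨C, hC, fun u D hu => ?_⟩
  have hD := hu.integrableOn_fderiv.aestronglyMeasurable.enorm
  set g := U.indicator (hD.mk _)
  have hgD : (fun z => ‖D z‖ₑ) =ᵐ[μ.restrict U] g := by
    filter_upwards [hD.ae_eq_mk, ae_restrict_mem hU_meas] with z hz hzU
    exact hz.trans (indicator_of_mem hzU _).symm
  have hg : ∫⁻ z, g z ^ q ∂μ = ∫⁻ x in U, ‖D x‖ₑ ^ q ∂μ := by
    have hpow : ∀ᵐ z ∂μ.restrict U, ‖D z‖ₑ ^ q = g z ^ q := hgD.mono fun z hz => by rw [← hz]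
    rw [lintegral_congr_ae hpow, ← lintegral_indicator hU_meas]
    refine lintegral_congr fun z => ?_
    by_cases hz : z ∈ U
    · rw [indicator_of_mem hz]
    · simp [g, hz, ENNReal.zero_rpow_of_pos (zero_lt_one.trans_le hq)]
  rw [← hg]
  exact hmain g _ (hD.measurable_mk.indicator hU_meas)
    (hu.integrableOn.aestronglyMeasurable.sub aestronglyMeasurable_const).enorm
    (hu.ae_enorm_sub_integral_smul_le hU hU_meas hφ hφc hφU hφ₁ hK hρ₀
      (fun x hx => hφU.trans (hρ x hx)) (hgD.mono fun z hz => hz.le))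

theorem exists_setLIntegral_enorm_sub_setAverage_rpow_le (hU : Convex ℝ U) (hU_open : IsOpen U)
    (hU_nonempty : U.Nonempty) (hU_bdd : IsBounded U) (hp : 2 ≤ p) (hq : 1 ≤ q) (hqp : q ≤ p)
    (hqE : q < Module.finrank ℝ E) (hα : 0 < α) (hβ : 0 < β) (hαβ : (p - 1) * α + q * β = p)
    (hle : α ≤ (q - p + p * q / Module.finrank ℝ E) * β) :
    ∃ C : ℝ≥0∞, C ≠ ∞ ∧ ∀ (u : E → F) (D : E → E →L[ℝ] F), HasWeakFDerivOn μ D u U →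
      ∫⁻ x in U, ‖u x - ⨍ z in U, u z ∂μ‖ₑ ^ p ∂μ ≤
        C * ((∫⁻ x in U, ‖u x‖ₑ ^ (p - 1) ∂μ) ^ α * (∫⁻ x in U, ‖D x‖ₑ ^ q ∂μ) ^ β) := by
  obtain ⟨φ, hφ, hφc, hφU, hφ₁⟩ := exists_contDiff_tsupport_subset_integral_eq_one μ hU_open
    hU_nonempty
  obtain ⟨K, hK⟩ := hφ.continuous.bounded_above_of_compact_support hφc
  have := isFiniteMeasure_restrict.2 (hU_bdd.measure_lt_top (μ := μ)).ne
  have : NeZero (μ.restrict U) := ⟨by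
    rw [Ne, Measure.restrict_eq_zero]
    exact (hU_open.measure_pos μ hU_nonempty).ne'⟩
  obtain ⟨C, hC, hmain⟩ := exists_setLIntegral_enorm_sub_integral_smul_rpow_le (F := F) μ hU
    hU_open.measurableSet hU_bdd hφ hφc hφU hφ₁ (by linarith) hq hqp hqE hα hβ hαβ hle
  set A := ENNReal.ofReal K * μ.restrict U univ
  refine ⟨2 ^ (p - 1) * (1 + 1 ^ p) * (C * (2 ^ (p - 1 - 1) * (1 + A ^ (p - 1))) ^ α),
    ?_, fun u D hu => ?_⟩
  · have := (hU_bdd.measure_lt_top (μ := μ)).ne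
    have hp₁ : 0 ≤ p - 1 - 1 := by linarith
    have hp₂ : 0 ≤ p - 1 := by linarith
    have hA_top : A ≠ ∞ := by finiteness
    finiteness
  set m := ∫ z in U, φ z • u z ∂μ
  have hu_meas := hu.integrableOn.aestronglyMeasurable
  have haverage : ‖⨍ z in U, (u z - m) ∂μ‖ₑ ≤ 1 * ⨍⁻ x in U, ‖u x - m‖ₑ ∂μ := by
    rw [one_mul]
    exact enorm_integral_le_lintegral_enorm _
  calc ∫⁻ x in U, ‖u x - ⨍ z in U, u z ∂μ‖ₑ ^ p ∂μ
      = ∫⁻ x in U, ‖u x - m - ⨍ z in U, (u z - m) ∂μ‖ₑ ^ p ∂μ := by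
        simp only [average_sub_const hu.integrableOn, sub_sub_sub_cancel_right]
    _ ≤ 2 ^ (p - 1) * (1 + 1 ^ p) * ∫⁻ x in U, ‖u x - m‖ₑ ^ p ∂μ :=
        lintegral_enorm_sub_rpow_le (by linarith) (hu_meas.sub aestronglyMeasurable_const)
          haverage
    _ ≤ 2 ^ (p - 1) * (1 + 1 ^ p) * (C * ((2 ^ (p - 1 - 1) * (1 + A ^ (p - 1)) *
          ∫⁻ x in U, ‖u x‖ₑ ^ (p - 1) ∂μ) ^ α * (∫⁻ x in U, ‖D x‖ₑ ^ q ∂μ) ^ β)) := by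
        gcongr
        refine (hmain u D hu).trans ?_
        gcongr
        exact lintegral_enorm_sub_rpow_le (by linarith) hu_meas (enorm_integral_smul_le hK)
    _ = _ := by
        rw [ENNReal.mul_rpow_of_nonneg _ _ hα.le]
        ring

theorem exists_setIntegral_norm_sub_setAverage_rpow_le (hU : Convex ℝ U) (hU_open : IsOpen U)
    (hU_nonempty : U.Nonempty) (hU_bdd : IsBounded U) (hp : 2 ≤ p) (hq : 1 ≤ q) (hqp : q ≤ p)
    (hqE : q < Module.finrank ℝ E) (hα : 0 < α) (hβ : 0 < β) (hαβ : (p - 1) * α + q * β = p)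
    (hle : α ≤ (q - p + p * q / Module.finrank ℝ E) * β) :
    ∃ C : ℝ, 0 < C ∧ ∀ (u : E → F) (D : E → E →L[ℝ] F), HasWeakFDerivOn μ D u U →
      IntegrableOn (fun x => ‖u x‖ ^ (p - 1)) U μ → IntegrableOn (fun x => ‖D x‖ ^ q) U μ →
      ∫ x in U, ‖u x - ⨍ z in U, u z ∂μ‖ ^ p ∂μ ≤
        C * ((∫ x in U, ‖u x‖ ^ (p - 1) ∂μ) ^ α * (∫ x in U, ‖D x‖ ^ q ∂μ) ^ β) := by
  obtain ⟨C, hC, hle⟩ := exists_setLIntegral_enorm_sub_setAverage_rpow_le (F := F) μ hU hU_open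
    hU_nonempty hU_bdd hp hq hqp hqE hα hβ hαβ hle
  refine ⟨C.toReal + 1, by positivity, fun u D hu hu_int hD_int => ?_⟩
  by_cases hosc : IntegrableOn (fun x => ‖u x - ⨍ z in U, u z ∂μ‖ ^ p) U μ
  swap
  · rw [integral_undef hosc]
    positivity
  have hle := hle u D hu
  rw [← ofReal_integral_norm_rpow (by linarith) hosc,
    ← ofReal_integral_norm_rpow (by linarith) hu_int,
    ← ofReal_integral_norm_rpow (by linarith) hD_int,
    ENNReal.ofReal_rpow_of_nonneg (by positivity) hα.le,
    ENNReal.ofReal_rpow_of_nonneg (by positivity) hβ.le, ← ENNReal.ofReal_mul (by positivity),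
    ← ENNReal.ofReal_toReal hC, ← ENNReal.ofReal_mul ENNReal.toReal_nonneg] at hle
  refine ((ENNReal.ofReal_le_ofReal_iff (by positivity)).1 hle).trans ?_
  gcongr
  exact le_add_of_nonneg_right zero_le_one

end Interpolation

section Scaling

open scoped Pointwise

variable {E F : Type*} [NormedAddCommGroup E] [NormedSpace ℝ E] [FiniteDimensional ℝ E]
  [MeasurableSpace E] [BorelSpace E] [NormedAddCommGroup F] {μ : Measure E} [μ.IsAddHaarMeasure]
  {U : Set E} {r : ℝ}

lemma integrableOn_comp_smul_iff (hU : MeasurableSet U) (hr : 0 < r) (f : E → F) :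
    IntegrableOn (fun x => f (r • x)) U μ ↔ IntegrableOn f (r • U) μ := by
  rw [← integrable_indicator_iff hU, ← integrable_indicator_iff (hU.const_smul₀ r),
    ← integrable_comp_smul_iff μ ((r • U).indicator f) hr.ne']
  have hindicator : ∀ x, (r • U).indicator f (r • x) = U.indicator (fun x => f (r • x)) x :=
    fun x => by
      rw [← indicator_comp_right (fun x => r • x), preimage_smul₀ hr.ne', inv_smul_smul₀ hr.ne']
      rfl
  simp only [hindicator]

variable [NormedSpace ℝ F]

lemma setAverage_comp_smul (hr : 0 < r) (f : E → F) :
    ⨍ x in U, f (r • x) ∂μ = ⨍ x in r • U, f x ∂μ := by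
  rw [setAverage_eq, setAverage_eq, Measure.setIntegral_comp_smul_of_pos μ f U hr, smul_smul,
    measureReal_def, measureReal_def, Measure.addHaar_smul_of_nonneg μ hr.le, ENNReal.toReal_mul,
    ENNReal.toReal_ofReal (by positivity), mul_inv, mul_comm]

lemma HasWeakFDerivOn.comp_smul {u : E → F} {D : E → E →L[ℝ] F}
    (hu : HasWeakFDerivOn μ D u (r • U)) (hU : MeasurableSet U) (hr : 0 < r) :
    HasWeakFDerivOn μ (fun x => r • D (r • x)) (fun x => u (r • x)) U where
  integrableOn := (integrableOn_comp_smul_iff hU hr u).2 hu.integrableOn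
  integrableOn_fderiv := ((integrableOn_comp_smul_iff hU hr D).2 hu.integrableOn_fderiv).smul r
  integral_smul_apply φ hφ hφc hφU e := by
    set ψ : E → ℝ := fun x => φ (r⁻¹ • x)
    have hψ : ContDiff ℝ (⊤ : ℕ∞) ψ := by fun_prop
    have hψc : HasCompactSupport ψ :=
      hφc.comp_isClosedEmbedding
        (Homeomorph.smulOfNeZero r⁻¹ (inv_ne_zero hr.ne')).isClosedEmbedding
    have hψU : tsupport ψ ⊆ r • U := fun x hx =>
      (mem_smul_set_iff_inv_smul_mem₀ hr.ne' U x).2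
        (hφU (tsupport_comp_subset_preimage φ (continuous_const_smul r⁻¹) hx))
    have hfderiv : ∀ x, r • fderiv ℝ ψ (r • x) e = fderiv ℝ φ x e := fun x => by
      rw [fderiv_comp_smul, inv_smul_smul₀ hr.ne', smul_apply, smul_inv_smul₀ hr.ne']
    have hψφ : ∀ x, ψ (r • x) = φ x := fun x => by simp only [ψ, inv_smul_smul₀ hr.ne']
    have hweak := congrArg (fun y => r • (r ^ Module.finrank ℝ E)⁻¹ • y)
      (hu.integral_smul_apply ψ hψ hψc hψU e)
    simp only [smul_neg] at hweak
    rw [← Measure.setIntegral_comp_smul_of_pos μ _ U hr,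
      ← Measure.setIntegral_comp_smul_of_pos μ _ U hr, ← integral_smul, ← integral_smul] at hweak
    simpa only [hψφ, smul_comm r (φ _), ← smul_assoc, hfderiv, smul_apply] using hweak

variable [CompleteSpace F] (μ) {p q α β : ℝ}

theorem exists_setIntegral_smul_norm_sub_setAverage_rpow_le (hU : Convex ℝ U) (hU_open : IsOpen U)
    (hU_nonempty : U.Nonempty) (hU_bdd : IsBounded U) (hp : 2 ≤ p) (hq : 1 ≤ q) (hqp : q ≤ p)
    (hqE : q < Module.finrank ℝ E) (hα : 0 < α) (hβ : 0 < β) (hαβ : (p - 1) * α + q * β = p)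
    (hle : α ≤ (q - p + p * q / Module.finrank ℝ E) * β) :
    ∃ C : ℝ, 0 < C ∧ ∀ r > 0, ∀ (u : E → F) (D : E → E →L[ℝ] F), HasWeakFDerivOn μ D u (r • U) →
      IntegrableOn (fun x => ‖u x‖ ^ (p - 1)) (r • U) μ →
      IntegrableOn (fun x => ‖D x‖ ^ q) (r • U) μ →
      ∫ x in r • U, ‖u x - ⨍ z in r • U, u z ∂μ‖ ^ p ∂μ ≤
        C * r ^ (Module.finrank ℝ E * (1 - α) + (q - Module.finrank ℝ E) * β) *
          ((∫ x in r • U, ‖u x‖ ^ (p - 1) ∂μ) ^ α * (∫ x in r • U, ‖D x‖ ^ q ∂μ) ^ β) := by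
  obtain ⟨C, hC, hle⟩ := exists_setIntegral_norm_sub_setAverage_rpow_le (F := F) μ hU hU_open
    hU_nonempty hU_bdd hp hq hqp hqE hα hβ hαβ hle
  refine ⟨C, hC, fun r hr u D hu hu_int hD_int => ?_⟩
  have hnorm : ∀ x, ‖r • D (r • x)‖ ^ q = r ^ q * ‖D (r • x)‖ ^ q := fun x => by
    rw [norm_smul, Real.norm_of_nonneg hr.le, Real.mul_rpow hr.le (norm_nonneg _)]
  have hle := hle _ _ (hu.comp_smul hU_open.measurableSet hr)
    ((integrableOn_comp_smul_iff hU_open.measurableSet hr _).2 hu_int)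
    (by
      simp only [hnorm]
      exact ((integrableOn_comp_smul_iff hU_open.measurableSet hr _).2 hD_int).const_mul _)
  simp only [hnorm, integral_const_mul, setAverage_comp_smul hr] at hle
  rw [Measure.setIntegral_comp_smul_of_pos μ (fun x => ‖u x - ⨍ z in r • U, u z ∂μ‖ ^ p) U hr,
    Measure.setIntegral_comp_smul_of_pos μ (fun x => ‖u x‖ ^ (p - 1)) U hr,
    Measure.setIntegral_comp_smul_of_pos μ (fun x => ‖D x‖ ^ q) U hr, smul_eq_mul, smul_eq_mul,
    smul_eq_mul, inv_mul_le_iff₀ (by positivity)] at hle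
  refine hle.trans_eq ?_
  set d := Module.finrank ℝ E
  rw [Real.mul_rpow (by positivity) (by positivity), Real.mul_rpow (by positivity) (by positivity),
    Real.mul_rpow (by positivity) (by positivity), ← Real.rpow_natCast, ← Real.rpow_neg hr.le,
    ← Real.rpow_mul hr.le, ← Real.rpow_mul hr.le, ← Real.rpow_mul hr.le]
  have hexp : (d * (1 - α) + (q - d) * β : ℝ) = d + -d * α + q * β + -d * β := by ring
  rw [hexp, Real.rpow_add hr, Real.rpow_add hr, Real.rpow_add hr]
  ring

end Scaling

section TimeIntegration

variable {T : Type*} [MeasurableSpace T] {ν : Measure T} [IsFiniteMeasure ν] {f : T → ℝ} {β : ℝ}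

lemma integrable_rpow_of_le_one (hβ₀ : 0 < β) (hβ₁ : β ≤ 1) (hf₀ : 0 ≤ᵐ[ν] f)
    (hf : Integrable f ν) : Integrable (fun t => f t ^ β) ν := by
  have hβ : 1 ≤ 1 / ENNReal.ofReal β := by
    rw [one_div, ENNReal.one_le_inv]
    exact ENNReal.ofReal_le_one.2 hβ₁
  refine (((memLp_one_iff_integrable.2 hf).norm_rpow_div (ENNReal.ofReal β)).integrable hβ).congr ?_
  filter_upwards [hf₀] with t ht
  rw [Real.norm_of_nonneg ht, ENNReal.toReal_ofReal hβ₀.le]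

lemma integral_rpow_le_of_le_one (hβ₀ : 0 < β) (hβ₁ : β ≤ 1) (hf₀ : 0 ≤ᵐ[ν] f)
    (hf : Integrable f ν) :
    ∫ t, f t ^ β ∂ν ≤ ν.real univ ^ (1 - β) * (∫ t, f t ∂ν) ^ β := by
  rcases eq_zero_or_neZero ν with rfl | hν
  · simp [Real.zero_rpow hβ₀.ne']
  have hν₀ : 0 < ν.real univ := measureReal_univ_pos
  have hjensen := (Real.concaveOn_rpow hβ₀.le hβ₁).le_map_average
    (continuousOn_id.rpow_const fun x _ => Or.inr hβ₀.le) isClosed_Ici hf₀ hf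
    (integrable_rpow_of_le_one hβ₀ hβ₁ hf₀ hf)
  rw [average_eq, average_eq, smul_eq_mul, smul_eq_mul, inv_mul_le_iff₀ hν₀,
    Real.mul_rpow (by positivity) (integral_nonneg_of_ae hf₀), ← mul_assoc,
    Real.inv_rpow hν₀.le, ← div_eq_mul_inv] at hjensen
  rwa [Real.rpow_sub hν₀, Real.rpow_one]

open scoped Pointwise

variable {E F : Type*} [NormedAddCommGroup E] [NormedSpace ℝ E] [FiniteDimensional ℝ E]
  [MeasurableSpace E] [BorelSpace E] [NormedAddCommGroup F] [NormedSpace ℝ F] [CompleteSpace F]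
  (μ : Measure E) [μ.IsAddHaarMeasure] {U : Set E} {p q α : ℝ}

theorem exists_integral_setIntegral_smul_norm_sub_setAverage_rpow_le (hU : Convex ℝ U)
    (hU_open : IsOpen U) (hU_nonempty : U.Nonempty) (hU_bdd : IsBounded U) (hp : 2 ≤ p) (hq : 1 ≤ q)
    (hqp : q ≤ p) (hqE : q < Module.finrank ℝ E) (hα : 0 < α) (hβ₀ : 0 < β) (hβ₁ : β ≤ 1)
    (hαβ : (p - 1) * α + q * β = p) (hle : α ≤ (q - p + p * q / Module.finrank ℝ E) * β) :
    ∃ C : ℝ, 0 < C ∧ ∀ (ν : Measure T) [IsFiniteMeasure ν], ∀ r > 0, ∀ (u : T → E → F)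
      (D : T → E → E →L[ℝ] F) (S : ℝ) (g : T → ℝ), 0 ≤ S → Integrable g ν →
      (∀ᵐ t ∂ν, HasWeakFDerivOn μ (D t) (u t) (r • U)) →
      (∀ᵐ t ∂ν, IntegrableOn (fun x => ‖u t x‖ ^ (p - 1)) (r • U) μ ∧
        ∫ x in r • U, ‖u t x‖ ^ (p - 1) ∂μ ≤ S) →
      (∀ᵐ t ∂ν, IntegrableOn (fun x => ‖D t x‖ ^ q) (r • U) μ ∧
        ∫ x in r • U, ‖D t x‖ ^ q ∂μ ≤ g t) →
      ∫ t, ∫ x in r • U, ‖u t x - ⨍ z in r • U, u t z ∂μ‖ ^ p ∂μ ∂ν ≤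
        C * r ^ (Module.finrank ℝ E * (1 - α) + (q - Module.finrank ℝ E) * β) *
          (S ^ α * (ν.real univ ^ (1 - β) * (∫ t, g t ∂ν) ^ β)) := by
  obtain ⟨C, hC, hslice⟩ := exists_setIntegral_smul_norm_sub_setAverage_rpow_le (F := F) μ hU
    hU_open hU_nonempty hU_bdd hp hq hqp hqE hα hβ₀ hαβ hle
  refine ⟨C, hC, fun ν _ r hr u D S g hS hg hu hu_le hD_le => ?_⟩
  set e := Module.finrank ℝ E * (1 - α) + (q - Module.finrank ℝ E) * β
  have hg₀ : 0 ≤ᵐ[ν] g := hD_le.mono fun t ht =>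
    (integral_nonneg fun x => by positivity).trans ht.2
  have hslice_le : ∀ᵐ t ∂ν, ∫ x in r • U, ‖u t x - ⨍ z in r • U, u t z ∂μ‖ ^ p ∂μ ≤
      C * r ^ e * (S ^ α * g t ^ β) := by
    filter_upwards [hu, hu_le, hD_le] with t ht hut hDt
    refine (hslice r hr _ _ ht hut.1 hDt.1).trans ?_
    gcongr
    exacts [hut.2, hDt.2]
  calc _ ≤ ∫ t, C * r ^ e * (S ^ α * g t ^ β) ∂ν :=
        integral_mono_of_nonneg (ae_of_all _ fun t => integral_nonneg fun x => by positivity)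
          (((integrable_rpow_of_le_one hβ₀ hβ₁ hg₀ hg).const_mul _).const_mul _) hslice_le
    _ = C * r ^ e * (S ^ α * ∫ t, g t ^ β ∂ν) := by rw [integral_const_mul, integral_const_mul]
    _ ≤ _ := by
        gcongr
        exact integral_rpow_le_of_le_one hβ₀ hβ₁ hg₀ hg

end TimeIntegration

section NavierStokes

open scoped Pointwise

variable {v : V3 → ℝ → V3} {dv : V3 → ℝ → V3 →L[ℝ] V3} {q r : ℝ}

lemma norm_le_fnorm (A : V3 →L[ℝ] V3) : ‖A‖ ≤ fnorm A := by
  refine A.opNorm_le_bound (Real.sqrt_nonneg _) fun x => ?_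
  have hx : x = ∑ i, x i • e3 i := by
    ext j; simp [e3, Pi.single_apply]
  calc ‖A x‖ = ‖∑ i, x i • A (e3 i)‖ := by
        conv_lhs => rw [hx]
        simp only [map_sum, map_smul]
    _ ≤ ∑ i, ‖A (e3 i)‖ * ‖x i‖ := by
        refine (norm_sum_le _ _).trans_eq (Finset.sum_congr rfl fun i _ => ?_)
        rw [norm_smul, mul_comm]
    _ ≤ Real.sqrt (∑ i, ‖A (e3 i)‖ ^ 2) * Real.sqrt (∑ i, ‖x i‖ ^ 2) :=
        Real.sum_mul_le_sqrt_mul_sqrt _ _ _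
    _ = fnorm A * ‖x‖ := by
        rw [EuclideanSpace.norm_eq x]; rfl

lemma integrable_of_integrable_norm_rpow {Ω G : Type*} [MeasurableSpace Ω] {ν : Measure Ω}
    [IsFiniteMeasure ν] [NormedAddCommGroup G] {f : Ω → G} {s : ℝ} (hs : 1 ≤ s)
    (hf : AEStronglyMeasurable f ν) (hint : Integrable (fun x => ‖f x‖ ^ s) ν) :
    Integrable f ν := by
  have hs₀ : ENNReal.ofReal s ≠ 0 := (ENNReal.ofReal_pos.2 (by linarith)).ne'
  rw [← ENNReal.toReal_ofReal (zero_le_one.trans hs),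
    integrable_norm_rpow_iff hf hs₀ ENNReal.ofReal_ne_top] at hint
  exact hint.integrable (ENNReal.one_le_ofReal.2 hs)

lemma integrable_norm_rpow_of_fnorm {Ω : Type*} [MeasurableSpace Ω] {ν : Measure Ω}
    {D : Ω → V3 →L[ℝ] V3} (hq : 0 ≤ q) (hD : AEStronglyMeasurable D ν)
    (hint : Integrable (fun x => fnorm (D x) ^ q) ν) :
    Integrable (fun x => ‖D x‖ ^ q) ν ∧ ∫ x, ‖D x‖ ^ q ∂ν ≤ ∫ x, fnorm (D x) ^ q ∂ν := by
  have hle : ∀ x, ‖D x‖ ^ q ≤ fnorm (D x) ^ q := fun x => by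
    gcongr
    exact norm_le_fnorm (D x)
  have hint_norm : Integrable (fun x => ‖D x‖ ^ q) ν :=
    hint.mono' (hD.norm.aemeasurable.pow_const q).aestronglyMeasurable
      (ae_of_all _ fun x => by rw [Real.norm_of_nonneg (by positivity)]; exact hle x)
  exact ⟨hint_norm, integral_mono hint_norm hint hle⟩

lemma IsWeakSpatialGradient.mono {U V : Set V3} {I J : Set ℝ}
    (hdv : IsWeakSpatialGradient U I v dv) (hU : MeasurableSet U) (hVU : V ⊆ U) (hJI : J ⊆ I) :
    IsWeakSpatialGradient V J v dv := by
  filter_upwards [ae_restrict_of_ae_restrict_of_subset hJI hdv] with t ht φ hφ e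
  have hzero : ∀ x ∈ U \ V, x ∉ tsupport φ := fun x hx hxφ => hx.2 (hφ.2.2 hxφ)
  rw [← setIntegral_eq_of_subset_of_forall_sdiff_eq_zero hU hVU fun x hx => by
      rw [image_eq_zero_of_notMem_tsupport (hzero x hx), zero_smul],
    ← setIntegral_eq_of_subset_of_forall_sdiff_eq_zero hU hVU fun x hx => by
      rw [fderiv_of_notMem_tsupport ℝ (hzero x hx), zero_apply, zero_smul]]
  exact ht φ ⟨hφ.1, hφ.2.1, hφ.2.2.trans hVU⟩ e

lemma IsWeakSpatialGradient.ae_hasWeakFDerivOn {U : Set V3} {I : Set ℝ}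
    (hdv : IsWeakSpatialGradient U I v dv)
    (hv_int : ∀ᵐ t ∂volume.restrict I, IntegrableOn (fun x => v x t) U)
    (hdv_int : ∀ᵐ t ∂volume.restrict I, IntegrableOn (fun x => dv x t) U) :
    ∀ᵐ t ∂volume.restrict I,
      HasWeakFDerivOn volume (fun x => dv x t) (fun x => v x t) U := by
  filter_upwards [hv_int, hdv_int, hdv] with t hvt hdvt ht
  exact ⟨hvt, hdvt, fun φ hφ hφc hφU e => ht φ ⟨hφ, hφc, hφU⟩ e⟩

lemma funA_nonneg (v : V3 → ℝ → V3) (hr : 0 ≤ r) : 0 ≤ funA v r := by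
  refine mul_nonneg (inv_nonneg.2 hr) (Real.sSup_nonneg ?_)
  rintro _ ⟨t, -, rfl⟩
  exact integral_nonneg fun x => by positivity

lemma setIntegral_norm_sq_le_mul_funA (hr : 0 < r)
    (hbdd : BddAbove ((fun s => ∫ x in ball (0 : V3) r, ‖v x s‖ ^ 2) '' Ioo (-r ^ 2) 0)) {t : ℝ}
    (ht : t ∈ Ioo (-r ^ 2) 0) : ∫ x in ball (0 : V3) r, ‖v x t‖ ^ 2 ≤ r * funA v r := by
  rw [funA, mul_inv_cancel_left₀ hr.ne']
  exact le_csSup hbdd (mem_image_of_mem _ ht)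

lemma setIntegral_fnorm_rpow_eq_mul_funEqz (dv : V3 → ℝ → V3 →L[ℝ] V3) (q : ℝ) (hr : 0 < r) :
    ∫ t in Ioo (-r ^ 2) 0, ∫ x in ball (0 : V3) r, fnorm (dv x t) ^ q =
      r ^ (5 - 2 * q) * funEqz dv q r := by
  rw [funEqz, ← mul_assoc, ← Real.rpow_add hr, sub_add_sub_cancel', sub_self,
    Real.rpow_zero, one_mul]

lemma funEqz_nonneg (dv : V3 → ℝ → V3 →L[ℝ] V3) (q : ℝ) (hr : 0 ≤ r) : 0 ≤ funEqz dv q r :=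
  mul_nonneg (Real.rpow_nonneg hr _) <| integral_nonneg fun _ => integral_nonneg fun _ =>
    Real.rpow_nonneg (Real.sqrt_nonneg _) _

variable {α β : ℝ}

theorem exists_setIntegral_ball_norm_sub_setAverage_pow_three_le (hq₁ : 1 ≤ q) (hq₃ : q < 3)
    (hα : 0 < α) (hβ₀ : 0 < β) (hβ₁ : β ≤ 1) (hαβ : 2 * α + q * β = 3)
    (hle : α ≤ (2 * q - 3) * β) :
    ∃ C : ℝ, 0 < C ∧ ∀ (v : V3 → ℝ → V3) (dv : V3 → ℝ → V3 →L[ℝ] V3), ∀ r > 0,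
      ∀ (S : ℝ) (g : ℝ → ℝ), 0 ≤ S → IntegrableOn g (Ioo (-r ^ 2) 0) →
      (∀ᵐ t ∂volume.restrict (Ioo (-r ^ 2) 0),
        HasWeakFDerivOn volume (fun x => dv x t) (fun x => v x t) (ball 0 r)) →
      (∀ᵐ t ∂volume.restrict (Ioo (-r ^ 2) 0), IntegrableOn (fun x => ‖v x t‖ ^ 2) (ball 0 r) ∧
        ∫ x in ball 0 r, ‖v x t‖ ^ 2 ≤ S) →
      (∀ᵐ t ∂volume.restrict (Ioo (-r ^ 2) 0), IntegrableOn (fun x => ‖dv x t‖ ^ q) (ball 0 r) ∧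
        ∫ x in ball 0 r, ‖dv x t‖ ^ q ≤ g t) →
      ∫ t in Ioo (-r ^ 2) 0, ∫ x in ball 0 r, ‖v x t - ⨍ y in ball 0 r, v y t‖ ^ 3 ≤
        C * r ^ (3 * (1 - α) + (q - 3) * β) *
          (S ^ α * ((r ^ 2) ^ (1 - β) * (∫ t in Ioo (-r ^ 2) 0, g t) ^ β)) := by
  obtain ⟨C, hC, hmain⟩ := exists_integral_setIntegral_smul_norm_sub_setAverage_rpow_le
    (T := ℝ) (F := V3) (volume : Measure V3) (convex_ball 0 1) isOpen_ball ⟨0, by simp⟩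
    isBounded_ball (p := 3) (by norm_num) hq₁ hq₃.le (by simpa using hq₃) hα hβ₀ hβ₁ (by linarith)
    (hle.trans_eq (by simp only [finrank_euclideanSpace_fin]; push_cast; ring))
  refine ⟨C, hC, fun v dv r hr S g hS hg hweak hv hdv => ?_⟩
  have hosc := hmain (volume.restrict (Ioo (-r ^ 2) 0)) r hr (fun t x => v x t) (fun t x => dv x t)
    S g hS hg
  have hlength : volume.real (Ioo (-r ^ 2) 0) = r ^ 2 := by
    rw [Real.volume_real_Ioo_of_le (neg_nonpos.2 (sq_nonneg r)), zero_sub, neg_neg]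
  simp only [smul_unitBall_of_pos hr, show (3 : ℝ) - 1 = 2 by norm_num, Real.rpow_ofNat,
    finrank_euclideanSpace_fin, Nat.cast_ofNat, measureReal_restrict_apply_univ, hlength] at hosc
  exact hosc hweak hv hdv

lemma IsWeakSpatialGradient.ae_hasWeakFDerivOn_ball {I : Set ℝ} (hq : 1 ≤ q)
    (hdv : IsWeakSpatialGradient (ball 0 r) I v dv) (hI : MeasurableSet I)
    (hv_meas : ∀ᵐ t ∂volume.restrict I,
      AEStronglyMeasurable (fun x => v x t) (volume.restrict (ball 0 r)))
    (hdv_meas : ∀ᵐ t ∂volume.restrict I,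
      AEStronglyMeasurable (fun x => dv x t) (volume.restrict (ball 0 r)))
    (hv_int : ∀ t ∈ I, IntegrableOn (fun x => ‖v x t‖ ^ 2) (ball 0 r))
    (hdv_int : ∀ᵐ t ∂volume.restrict I, IntegrableOn (fun x => ‖dv x t‖ ^ q) (ball 0 r)) :
    ∀ᵐ t ∂volume.restrict I,
      HasWeakFDerivOn volume (fun x => dv x t) (fun x => v x t) (ball 0 r) := by
  have hfinite : IsFiniteMeasure (volume.restrict (ball (0 : V3) r)) :=
    isFiniteMeasure_restrict.2 measure_ball_lt_top.ne
  refine hdv.ae_hasWeakFDerivOn ?_ ?_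
  · filter_upwards [hv_meas, ae_restrict_mem hI] with t hmeas ht
    exact integrable_of_integrable_norm_rpow one_le_two hmeas
      ((hv_int t ht).congr (ae_of_all _ fun x => (Real.rpow_two _).symm))
  · filter_upwards [hdv_meas, hdv_int] with t hmeas hint
    exact integrable_of_integrable_norm_rpow hq hmeas hint

lemma rpow_mul_rpow_mul_rpow_eq_of_scaling (hαβ : 2 * α + q * β = 3) (hr : 0 < r) {A E : ℝ}
    (hA : 0 ≤ A) (hE : 0 ≤ E) :
    r ^ (-2 : ℝ) * (r ^ (3 * (1 - α) + (q - 3) * β) *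
      ((r * A) ^ α * ((r ^ 2) ^ (1 - β) * (r ^ (5 - 2 * q) * E) ^ β))) = A ^ α * E ^ β := by
  have hexp : -2 + (3 * (1 - α) + (q - 3) * β + (α + (2 * (1 - β) + (5 - 2 * q) * β))) = 0 := by
    linear_combination -hαβ
  have hcancel : r ^ (-2 : ℝ) * (r ^ (3 * (1 - α) + (q - 3) * β) *
      (r ^ α * (r ^ (2 * (1 - β)) * r ^ ((5 - 2 * q) * β)))) = 1 := by
    simp only [← Real.rpow_add hr]
    rw [hexp, Real.rpow_zero]
  rw [Real.mul_rpow hr.le hA, Real.mul_rpow (by positivity) hE, ← Real.rpow_two,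
    ← Real.rpow_mul hr.le, ← Real.rpow_mul hr.le]
  linear_combination A ^ α * E ^ β * hcancel

theorem exists_funCt_le (hq₁ : 1 ≤ q) (hq₃ : q < 3) (hα : 0 < α) (hβ₀ : 0 < β) (hβ₁ : β ≤ 1)
    (hαβ : 2 * α + q * β = 3) (hle : α ≤ (2 * q - 3) * β) :
    ∃ C : ℝ, 0 < C ∧ ∀ (v : V3 → ℝ → V3) (dv : V3 → ℝ → V3 →L[ℝ] V3), ∀ r > 0,
      AEStronglyMeasurable (fun z : V3 × ℝ => v z.1 z.2)
        (volume.restrict (ball 0 r ×ˢ Ioo (-r ^ 2) 0)) →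
      AEStronglyMeasurable (fun z : V3 × ℝ => dv z.1 z.2)
        (volume.restrict (ball 0 r ×ˢ Ioo (-r ^ 2) 0)) →
      (∀ t ∈ Ioo (-r ^ 2) 0, IntegrableOn (fun x => ‖v x t‖ ^ 2) (ball 0 r)) →
      BddAbove ((fun t => ∫ x in ball (0 : V3) r, ‖v x t‖ ^ 2) '' Ioo (-r ^ 2) 0) →
      IsWeakSpatialGradient (ball 0 r) (Ioo (-r ^ 2) 0) v dv →
      IntegrableOn (fun z : V3 × ℝ => fnorm (dv z.1 z.2) ^ q) (ball 0 r ×ˢ Ioo (-r ^ 2) 0) →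
      funCt v r ≤ C * funA v r ^ α * funEqz dv q r ^ β := by
  obtain ⟨C, hC, hosc⟩ :=
    exists_setIntegral_ball_norm_sub_setAverage_pow_three_le hq₁ hq₃ hα hβ₀ hβ₁ hαβ hle
  refine ⟨C, hC, fun v dv r hr hv hdv hv_int hv_bdd hweak hdv_int => ?_⟩
  rw [Measure.volume_eq_prod, ← Measure.prod_restrict] at hv hdv
  rw [IntegrableOn, Measure.volume_eq_prod, ← Measure.prod_restrict] at hdv_int
  have hv_slice : ∀ᵐ t ∂volume.restrict (Ioo (-r ^ 2) 0),
      IntegrableOn (fun x => ‖v x t‖ ^ 2) (ball 0 r) ∧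
        ∫ x in ball 0 r, ‖v x t‖ ^ 2 ≤ r * funA v r := by
    filter_upwards [ae_restrict_mem measurableSet_Ioo] with t ht
    exact ⟨hv_int t ht, setIntegral_norm_sq_le_mul_funA hr hv_bdd ht⟩
  have hdv_slice : ∀ᵐ t ∂volume.restrict (Ioo (-r ^ 2) 0),
      IntegrableOn (fun x => ‖dv x t‖ ^ q) (ball 0 r) ∧
        ∫ x in ball 0 r, ‖dv x t‖ ^ q ≤ ∫ x in ball 0 r, fnorm (dv x t) ^ q := by
    filter_upwards [hdv.prodMk_right, hdv_int.prod_left_ae] with t hmeas hint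
    exact integrable_norm_rpow_of_fnorm (zero_le_one.trans hq₁) hmeas hint
  have hweak_slice := hweak.ae_hasWeakFDerivOn_ball hq₁ measurableSet_Ioo hv.prodMk_right
    hdv.prodMk_right hv_int (hdv_slice.mono fun t ht => ht.1)
  have hA := funA_nonneg v hr.le
  calc funCt v r ≤ r ^ (-2 : ℝ) * (C * r ^ (3 * (1 - α) + (q - 3) * β) * ((r * funA v r) ^ α *
        ((r ^ 2) ^ (1 - β) * (∫ t in Ioo (-r ^ 2) 0, ∫ x in ball 0 r, fnorm (dv x t) ^ q) ^ β))) :=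
        mul_le_mul_of_nonneg_left (hosc v dv r hr _ _ (mul_nonneg hr.le hA)
          hdv_int.integral_prod_right hweak_slice hv_slice hdv_slice) (by positivity)
    _ = C * funA v r ^ α * funEqz dv q r ^ β := by
        rw [setIntegral_fnorm_rpow_eq_mul_funEqz dv q hr]
        linear_combination
          C * rpow_mul_rpow_mul_rpow_eq_of_scaling hαβ hr hA (funEqz_nonneg dv q hr.le)

lemma interpolation_exponents {k : ℝ} (hq₁ : 9 / 5 ≤ q) (hq₃ : q < 3)
    (hk₁ : (3 - q) / (5 * q - 6) ≤ k) (hk₂ : k ≤ (3 - q) / 3) :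
    0 < (9 - 3 * q - 3 * q * k) / (6 - 2 * q) ∧ 0 < 3 * k / (3 - q) ∧ 3 * k / (3 - q) ≤ 1 ∧
      2 * ((9 - 3 * q - 3 * q * k) / (6 - 2 * q)) + q * (3 * k / (3 - q)) = 3 ∧
      (9 - 3 * q - 3 * q * k) / (6 - 2 * q) ≤ (2 * q - 3) * (3 * k / (3 - q)) := by
  have hq : 0 < 3 - q := by linarith
  have hq_crit : 0 < 5 * q - 6 := by linarith
  have hk : 0 < k := (div_pos hq hq_crit).trans_le hk₁
  have hβ₁ : 3 * k / (3 - q) ≤ 1 := (div_le_one hq).2 (by linarith)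
  have hβ : 3 ≤ 3 * k / (3 - q) * (5 * q - 6) := by
    rw [div_mul_eq_mul_div, le_div_iff₀ hq]
    linarith [(div_le_iff₀ hq_crit).1 hk₁]
  have hαβ : 2 * ((9 - 3 * q - 3 * q * k) / (6 - 2 * q)) + q * (3 * k / (3 - q)) = 3 := by
    rw [show 6 - 2 * q = 2 * (3 - q) by ring]
    field_simp
    ring
  have hqβ : q * (3 * k / (3 - q)) ≤ q := mul_le_of_le_one_right (by linarith) hβ₁
  exact ⟨by linarith, by positivity, hβ₁, hαβ, by linarith⟩

end NavierStokes

theorem statement14_general (q k : ℝ) (hq₁ : 9 / 5 ≤ q) (hq₃ : q < 3)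
    (hk₁ : (3 - q) / (5 * q - 6) ≤ k) (hk₂ : k ≤ (3 - q) / 3) :
    ∃ c : ℝ, 0 < c ∧
      ∀ (v : V3 → ℝ → V3) (dv : V3 → ℝ → V3 →L[ℝ] V3),
        AEMeasurable (fun z : V3 × ℝ => v z.1 z.2)
          (volume.restrict (ball (0 : V3) 1 ×ˢ Ioo (-1 : ℝ) 0)) →
        AEMeasurable (fun z : V3 × ℝ => dv z.1 z.2)
          (volume.restrict (ball (0 : V3) 1 ×ˢ Ioo (-1 : ℝ) 0)) →
        (∃ K : ℝ, ∀ s ∈ Ioo (-1 : ℝ) 0,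
          IntegrableOn (fun x => ‖v x s‖ ^ 2) (ball (0 : V3) 1) volume ∧
          (∫ x in ball (0 : V3) 1, ‖v x s‖ ^ 2) ≤ K) →
        IsWeakSpatialGradient (ball (0 : V3) 1) (Ioo (-1 : ℝ) 0) v dv →
        IntegrableOn (fun z : V3 × ℝ => fnorm (dv z.1 z.2) ^ q)
          (ball (0 : V3) 1 ×ˢ Ioo (-1 : ℝ) 0) volume →
        ∀ r : ℝ, 0 < r → r ≤ 1 →
          funCt v r ≤
            c * funA v r ^ ((9 - 3 * q - 3 * q * k) / (6 - 2 * q)) *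
              funEqz dv q r ^ (3 * k / (3 - q)) := by
  obtain ⟨hα, hβ₀, hβ₁, hαβ, hle⟩ := interpolation_exponents hq₁ hq₃ hk₁ hk₂
  obtain ⟨C, hC, hmain⟩ := exists_funCt_le (by linarith) hq₃ hα hβ₀ hβ₁ hαβ hle
  refine ⟨C, hC, fun v dv hv hdv ⟨K, hK⟩ hweak hdv_int r hr hr1 => ?_⟩
  have hball : ball (0 : V3) r ⊆ ball 0 1 := ball_subset_ball hr1
  have htime : Ioo (-r ^ 2) 0 ⊆ Ioo (-1 : ℝ) 0 :=
    Ioo_subset_Ioo_left (neg_le_neg (pow_le_one₀ hr.le hr1))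
  have hcylinder := prod_mono hball htime
  refine hmain v dv r hr
    (hv.mono_measure (Measure.restrict_mono hcylinder le_rfl)).aestronglyMeasurable
    (hdv.mono_measure (Measure.restrict_mono hcylinder le_rfl)).aestronglyMeasurable
    (fun t ht => (hK t (htime ht)).1.mono_set hball) ⟨K, ?_⟩
    (hweak.mono measurableSet_ball hball htime) (hdv_int.mono_set hcylinder)
  rintro _ ⟨t, ht, rfl⟩
  exact (setIntegral_mono_set (hK t (htime ht)).1 (ae_of_all _ fun x => by positivity)
    hball.eventuallyLE).trans (hK t (htime ht)).2

/-- interpolation inequality I. -/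
theorem statement14 (q k : ℝ) (hq1 : 9/5 ≤ q) (hq2 : q ≤ 2)
    (hk1 : (3 - q)/(5*q - 6) ≤ k) (hk2 : k ≤ (3 - q)/3) :
    ∃ c : ℝ, 0 < c ∧
      ∀ (v : V3 → ℝ → V3) (dv : V3 → ℝ → V3 →L[ℝ] V3),
        AEMeasurable (fun z : V3 × ℝ => v z.1 z.2)
          (volume.restrict (ball (0 : V3) 1 ×ˢ Ioo (-1 : ℝ) 0)) →
        AEMeasurable (fun z : V3 × ℝ => dv z.1 z.2)
          (volume.restrict (ball (0 : V3) 1 ×ˢ Ioo (-1 : ℝ) 0)) →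
        (∃ K : ℝ, ∀ s ∈ Ioo (-1 : ℝ) 0,
          IntegrableOn (fun x => ‖v x s‖ ^ 2) (ball (0 : V3) 1) volume ∧
          (∫ x in ball (0 : V3) 1, ‖v x s‖ ^ 2) ≤ K) →
        IsWeakSpatialGradient (ball (0 : V3) 1) (Ioo (-1 : ℝ) 0) v dv →
        IntegrableOn (fun z : V3 × ℝ => fnorm (dv z.1 z.2) ^ q)
          (ball (0 : V3) 1 ×ˢ Ioo (-1 : ℝ) 0) volume →
        ∀ r : ℝ, 0 < r → r ≤ 1 →
          funCt v r
            ≤ c * funA v r ^ ((9 - 3*q - 3*q*k)/(6 - 2*q))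
                * funEqz dv q r ^ (3*k/(3 - q)) :=
  statement14_general q k hq1 (by linarith) hk1 hk2

end
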